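/- Let p and q be multiplicatively independent integers, both greater than 1, and let 𝓑 = {p^ℓ q^m : ℓ, m nonnegative integers}. There exist positive real constants C and κ and a threshold N_0 such that for every integer n ≥ N_0 there exists B ∈ 𝓑 with n/2 < B ≤ n and n − B ≤ C · n / (log n)^κ. -/

import Mathlib

/-!
Write `n - B` with `B = p ^ ℓ * q ^ m` in terms of `log n - ℓ * log p - m * log q`: it suffices to
approximate `x = log n` from below by sums `ℓ * log p + m * log q` within a negative power of `x`.
Dirichlet's theorem gives `k, j ≤ O(Q)` for which `θ = k * log p - j * log q` has absolute value
`O(1 / Q)`. Starting from a multiple of `log q` (or of `log p`, according to the sign of `θ`) just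
below `x`, the error is corrected in steps of `|θ|`. About `1 / |θ|` steps are needed, and they use
up `O(Q / |θ|)` of the initial multiple, so this works as soon as `x` exceeds a constant times
`Q / |θ|`. Hence a bound `|θ| ≥ c * Q ^ (-K)` allows `Q` to be a power of `x`.

That bound (`linear_form_bound`) is the theorem of Fel'dman on linear forms in two logarithms with
fixed arguments; the weaker `exp (-(log Q) ^ C)` would not be enough. It is proved by the method of
Gel'fond and Baker. If `Λ = a * log p - b * log q` were extremely small and `log a, log b ≤ S`,
consider the functions `∑ c_{i,j} P_i(z) exp (v_j η z)` with `η = log p / b` and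
`v_j = j₁ * b + j₂ * a`, so that `exp (v_j η)` is nearly the integer `w_j = p ^ j₁ * q ^ j₂`. Three
points make the final estimate polynomial.

* The `P_i` are Fel'dman's products of binomial polynomials (`feldPoly`). At integers their `t`-th
  derivatives are of moderate size and have denominator dividing `lcm(1, …, S) ^ t`, which is at most
  `exp (6 * S * t)` by Chebyshev's bound. This keeps all heights of size `exp (O(S))`.
* Siegel's lemma (`exists_aux_coeffs`) yields integers `c_{i,j}`, not all zero, such that the
  function vanishes approximately to order `T` at `0, …, S - 1`. The approximate Schwarz lemma
  (`approx_schwarz`, through divided differences) extends these zeros to longer ranges with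
  shrinking orders (`extrapolation_step`), as an integer of absolute value below one is zero.
* After boundedly many steps the exponential polynomial `∑ c_{i,j} P_i(s) w_j ^ s` has more integer
  zeros than its total degree allows (`feld_zero_estimate`). Since the `w_j` are distinct by
  multiplicative independence, all `c_{i,j}` vanish, a contradiction.
-/

/-- Integers `p, q > 1` are multiplicatively independent. -/
def MultIndepPair (p q : ℕ) : Prop :=
  ∀ α β : ℤ, (p : ℝ) ^ α * (q : ℝ) ^ β = 1 → α = 0 ∧ β = 0

/-! ### Divided differences of entire functions -/

/-- Iterated difference quotients: `divDiff f a i n` is the entire function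
`z ↦ f[a i, …, a (i + n - 1), z]`. -/
noncomputable def divDiff (f : ℂ → ℂ) (a : ℕ → ℂ) (i : ℕ) : ℕ → ℂ → ℂ
  | 0 => f
  | n + 1 => dslope (divDiff f a i n) (a (i + n))

lemma differentiable_dslope' {f : ℂ → ℂ} (hf : Differentiable ℂ f) (a : ℂ) :
    Differentiable ℂ (dslope f a) := by
  have := (Complex.differentiableOn_dslope (f := f) (s := Set.univ) (c := a) Filter.univ_mem).2
    hf.differentiableOn
  exact differentiableOn_univ.1 this

lemma differentiable_divDiff {f : ℂ → ℂ} (hf : Differentiable ℂ f) (a : ℕ → ℂ) (i n : ℕ) :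
    Differentiable ℂ (divDiff f a i n) := by
  induction n with
  | zero => exact hf
  | succ n ih => exact differentiable_dslope' ih _

lemma dslope_symm (f : ℂ → ℂ) (a b : ℂ) : dslope f a b = dslope f b a := by
  by_cases h : a = b
  · rw [h]
  · rw [dslope_of_ne _ (Ne.symm h), dslope_of_ne _ h, slope_comm]

lemma dslope_dslope_comm {f : ℂ → ℂ} (hf : Differentiable ℂ f) (a b : ℂ) :
    dslope (dslope f a) b = dslope (dslope f b) a := by
  by_cases hab : a = b
  · rw [hab]
  have h1 := (differentiable_dslope' (differentiable_dslope' hf a) b).continuous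
  have h2 := (differentiable_dslope' (differentiable_dslope' hf b) a).continuous
  have hd : Dense ({a, b} : Set ℂ)ᶜ := ((Set.toFinite {a, b}).countable).dense_compl ℂ
  refine Continuous.ext_on hd h1 h2 ?_
  intro z hz
  simp only [Set.mem_compl_iff, Set.mem_insert_iff, Set.mem_singleton_iff, not_or] at hz
  obtain ⟨hza, hzb⟩ := hz
  have e1 : z - a ≠ 0 := sub_ne_zero.2 hza
  have e2 : z - b ≠ 0 := sub_ne_zero.2 hzb
  have e3 : a - b ≠ 0 := sub_ne_zero.2 hab
  have e4 : b - a ≠ 0 := sub_ne_zero.2 (Ne.symm hab)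
  rw [dslope_of_ne _ hzb, dslope_of_ne _ hza]
  simp only [slope_def_field]
  rw [dslope_of_ne _ hza, dslope_of_ne _ hzb, dslope_of_ne _ (Ne.symm hab), dslope_of_ne _ hab]
  simp only [slope_def_field]
  field_simp
  ring

/-- The node removed first may also be removed last. -/
lemma divDiff_succ_left {f : ℂ → ℂ} (hf : Differentiable ℂ f) (a : ℕ → ℂ) (i n : ℕ) :
    divDiff f a i (n + 1) = dslope (divDiff f a (i + 1) n) (a i) := by
  induction n with
  | zero => simp [divDiff]
  | succ n ih =>
    rw [divDiff, ih, dslope_dslope_comm (differentiable_divDiff hf a _ _), divDiff]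
    congr 3
    ring

/-- The recursion for divided differences over consecutive nodes. -/
lemma divDiff_rec {f : ℂ → ℂ} (hf : Differentiable ℂ f) (a : ℕ → ℂ) (i n : ℕ)
    (h : a (i + n + 1) ≠ a i) :
    divDiff f a i (n + 1) (a (i + n + 1)) =
      (divDiff f a (i + 1) n (a (i + 1 + n)) - divDiff f a i n (a (i + n))) /
        (a (i + n + 1) - a i) := by
  have key : divDiff f a (i + 1) n (a i) = divDiff f a i n (a (i + n)) := by
    cases n with
    | zero => rfl
    | succ n =>
      rw [divDiff_succ_left hf a i n, divDiff, dslope_symm, show i + 1 + n = i + (n + 1) by ring]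
  rw [divDiff_succ_left hf, dslope_of_ne _ h, slope_def_field, key,
    show i + 1 + n = i + n + 1 by ring]

lemma newton_expansion (f : ℂ → ℂ) (a : ℕ → ℂ) (n : ℕ) (z : ℂ) :
    f z = ∑ m ∈ Finset.range n, divDiff f a 0 m (a m) * ∏ j ∈ Finset.range m, (z - a j) +
      divDiff f a 0 n z * ∏ j ∈ Finset.range n, (z - a j) := by
  induction n with
  | zero => simp [divDiff]
  | succ n ih =>
    rw [Finset.sum_range_succ, Finset.prod_range_succ]
    have h := sub_smul_dslope (divDiff f a 0 n) (a n) z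
    rw [smul_eq_mul] at h
    have h2 : divDiff f a 0 (n + 1) z = dslope (divDiff f a 0 n) (a n) z := by
      simp [divDiff]
    rw [h2]
    linear_combination ih - (∏ j ∈ Finset.range n, (z - a j)) * h

lemma iteratedDeriv_dslope {f : ℂ → ℂ} (hf : Differentiable ℂ f) (a : ℂ) (m : ℕ) :
    iteratedDeriv (m + 1) f a = (m + 1) * iteratedDeriv m (dslope f a) a := by
  have hg := differentiable_dslope' hf a
  have e : f = fun z => f a + (z - a) * dslope f a z := by
    funext z
    have := sub_smul_dslope f a z
    rw [smul_eq_mul] at this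
    rw [this]; ring
  have hcg : ContDiff ℂ (⊤ : ℕ∞) (dslope f a) := hg.contDiff
  have hcd : ContDiff ℂ (⊤ : ℕ∞) (fun z : ℂ => z - a) := by fun_prop
  have key : iteratedDeriv (m + 1) (fun z => f a + (z - a) * dslope f a z) a =
      (m + 1) * iteratedDeriv m (dslope f a) a := by
    rw [iteratedDeriv_const_add (by omega)]
    have := iteratedDeriv_mul (n := m + 1) (x := a) (f := fun z : ℂ => z - a) (g := dslope f a)
      (hcd.contDiffAt.of_le (by exact_mod_cast le_top))
      (hcg.contDiffAt.of_le (by exact_mod_cast le_top))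
    have e2 : (fun z => (z - a) * dslope f a z) = (fun z : ℂ => z - a) * dslope f a := rfl
    rw [e2, this, Finset.sum_eq_single 1]
    · simp [iteratedDeriv_one]
    · intro b _ hb1
      rcases b with _ | _ | b
      · simp
      · simp at hb1
      · have : iteratedDeriv (b + 1 + 1) (fun z : ℂ => z - a) a = 0 := by
          rw [iteratedDeriv_succ', show deriv (fun z : ℂ => z - a) = fun _ => (1 : ℂ) by
            funext z; simp]
          rw [iteratedDeriv_const]; simp
        simp [this]
    · intro h; simp at h
  rw [← key, ← e]

/-- At a repeated node the divided difference is a normalised derivative. -/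
lemma divDiff_const {f : ℂ → ℂ} (hf : Differentiable ℂ f) (a : ℕ → ℂ) (b : ℂ) (i n : ℕ)
    (h : ∀ j < n, a (i + j) = b) (m : ℕ) :
    iteratedDeriv (n + m) f b = (n + m).descFactorial n * iteratedDeriv m (divDiff f a i n) b := by
  induction n generalizing m with
  | zero => simp [divDiff]
  | succ n ih =>
    have := ih (fun j hj => h j (by omega)) (m + 1)
    rw [show n + 1 + m = n + (m + 1) by ring, this,
      iteratedDeriv_dslope (differentiable_divDiff hf a i n), divDiff, h n (by omega),
      Nat.descFactorial_succ, show n + (m + 1) - n = m + 1 by omega]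
    push_cast
    ring

/-- Divided differences over the nodes `0, …, 0, 1, …, 1, 2, …`, each repeated `T` times. -/
lemma norm_divDiff_le {f : ℂ → ℂ} (hf : Differentiable ℂ f) {T : ℕ} (hT : 0 < T) (A : ℕ) {E : ℝ}
    (hE : ∀ s < A, ∀ m < T, ‖iteratedDeriv m f (s : ℂ)‖ ≤ E) (n i : ℕ) (hin : i + n < A * T) :
    ‖divDiff f (fun l => ((l / T : ℕ) : ℂ)) i n (((i + n) / T : ℕ) : ℂ)‖ ≤
      E * ((4 * T : ℝ) ^ n / n.factorial) := by
  have hE0 : 0 ≤ E := by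
    have hA : 0 < A := by
      rcases Nat.eq_zero_or_pos A with h | h
      · simp [h] at hin
      · exact h
    exact (norm_nonneg _).trans (hE 0 hA 0 hT)
  induction n generalizing i with
  | zero =>
    have := hE (i / T) (Nat.div_lt_of_lt_mul (by simpa [mul_comm] using hin)) 0 hT
    simpa [divDiff] using this
  | succ n ih =>
    set a : ℕ → ℂ := fun l => ((l / T : ℕ) : ℂ) with ha
    by_cases hne : (i + n + 1) / T = i / T
    · -- all nodes coincide
      have hall : ∀ j < n + 1, a (i + j) = ((i / T : ℕ) : ℂ) := by
        intro j hj
        have h1 : i / T ≤ (i + j) / T := Nat.div_le_div_right (by omega)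
        have h2 : (i + j) / T ≤ (i + n + 1) / T := Nat.div_le_div_right (by omega)
        have : (i + j) / T = i / T := by omega
        simp [ha, this]
      have hnT : n + 1 < T := by
        have h1 := Nat.div_add_mod i T
        have h2 := Nat.div_add_mod (i + n + 1) T
        have h3 := Nat.mod_lt (i + n + 1) hT
        rw [hne] at h2
        omega
      have h3 := divDiff_const hf a _ i (n + 1) hall 0
      simp only [add_zero, iteratedDeriv_zero, Nat.descFactorial_self] at h3
      have h4 := hE (i / T) (Nat.div_lt_of_lt_mul (by rw [mul_comm]; omega)) (n + 1) hnT
      rw [h3, norm_mul, Complex.norm_natCast] at h4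
      rw [show (i + (n + 1)) / T = i / T by rw [← hne]; congr 1]
      have hf1 : (1 : ℝ) ≤ ((n + 1).factorial : ℝ) := by
        exact_mod_cast Nat.factorial_pos _
      have hf2 : ((n + 1).factorial : ℝ) ≤ (4 * T : ℝ) ^ (n + 1) := by
        have : (n + 1).factorial ≤ (4 * T) ^ (n + 1) :=
          (Nat.factorial_le_pow (n + 1)).trans (Nat.pow_le_pow_left (by omega) _)
        exact_mod_cast this
      have hn0 := norm_nonneg (divDiff f a i (n + 1) ((i / T : ℕ) : ℂ))
      calc _ ≤ E := by nlinarith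
        _ ≤ _ := by
          apply le_mul_of_one_le_right hE0
          rw [le_div_iff₀ (by linarith)]
          linarith
    · have hne' : a (i + n + 1) ≠ a i := by
        simpa [ha] using hne
      have h1 := ih (i + 1) (by omega)
      have h2 := ih i (by omega)
      have hrec := divDiff_rec hf a i n hne'
      have hgap : ((n + 1 : ℕ) : ℝ) / (2 * T) ≤ ‖a (i + n + 1) - a i‖ := by
        have hle : i / T ≤ (i + n + 1) / T := Nat.div_le_div_right (by omega)
        have hnorm : ‖a (i + n + 1) - a i‖ = (((i + n + 1) / T - i / T : ℕ) : ℝ) := by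
          have : a (i + n + 1) - a i = (((i + n + 1) / T - i / T : ℕ) : ℂ) := by
            rw [Nat.cast_sub hle]
          rw [this, Complex.norm_natCast]
        rw [hnorm, div_le_iff₀ (by positivity)]
        have e1 := Nat.div_add_mod i T
        have e2 := Nat.div_add_mod (i + n + 1) T
        have e3 := Nat.mod_lt i hT
        have e4 := Nat.mod_lt (i + n + 1) hT
        obtain ⟨d, hd⟩ : ∃ d, (i + n + 1) / T = i / T + 1 + d := ⟨(i + n + 1) / T - i / T - 1, by omega⟩
        rw [hd] at e2 ⊢
        have e5 : n + 1 ≤ (1 + d) * (2 * T) := by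
          have e6 : T * (i / T + 1 + d) = T * (i / T) + T + T * d := by ring
          have e7 : (1 + d) * (2 * T) = 2 * T + 2 * (T * d) := by ring
          omega
        rw [show i / T + 1 + d - i / T = 1 + d by omega]
        exact_mod_cast e5
      have hpos : (0 : ℝ) < ((n + 1 : ℕ) : ℝ) / (2 * T) := by positivity
      change ‖divDiff f a i (n + 1) (a (i + n + 1))‖ ≤ _
      rw [hrec, norm_div]
      calc _ ≤ (2 * (E * ((4 * T : ℝ) ^ n / n.factorial))) / (((n + 1 : ℕ) : ℝ) / (2 * T)) := by
            apply div_le_div₀ (by positivity) _ hpos hgap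
            calc _ ≤ _ := norm_sub_le _ _
              _ ≤ E * ((4 * T : ℝ) ^ n / n.factorial) + E * ((4 * T : ℝ) ^ n / n.factorial) :=
                add_le_add h1 h2
              _ = _ := by ring
        _ = _ := by
          rw [Nat.factorial_succ]
          push_cast
          field_simp
          ring

/-- A Schwarz lemma with approximate zeros: if `f` and its first `T` derivatives are at most `E`
at the integers `0, …, A - 1`, then `f` is small on a disc much smaller than the one where it is
bounded by `M`. -/
lemma approx_schwarz {f : ℂ → ℂ} (hf : Differentiable ℂ f) {T A : ℕ} (hT : 0 < T) {E M R : ℝ}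
    (hE : ∀ s < A, ∀ m < T, ‖iteratedDeriv m f (s : ℂ)‖ ≤ E)
    (hM : ∀ z : ℂ, ‖z‖ = R → ‖f z‖ ≤ M) (hE0 : 0 ≤ E) {X : ℝ} (hX : A ≤ X) (hR : 4 * X ≤ R)
    (hX0 : 0 < X) {x : ℂ} (hx : ‖x‖ ≤ X) :
    ‖f x‖ ≤ (4 * X / R) ^ (A * T) * M + 2 * E * Real.exp (8 * T * R) := by
  set a : ℕ → ℂ := fun l => ((l / T : ℕ) : ℂ) with ha
  set n := A * T with hn
  have hR0 : 0 < R := by linarith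
  have hanorm : ∀ l < n, ‖a l‖ ≤ A := by
    intro l hl
    simp only [ha, Complex.norm_natCast]
    exact_mod_cast (Nat.div_lt_of_lt_mul (by rw [mul_comm]; exact hl)).le
  -- Newton's interpolating polynomial at the nodes, small because the values of `f` there are.
  set h : ℂ → ℂ := fun z =>
    ∑ m ∈ Finset.range n, divDiff f a 0 m (a m) * ∏ j ∈ Finset.range m, (z - a j) with hh
  have hhle : ∀ z : ℂ, ‖z‖ ≤ R → ‖h z‖ ≤ E * Real.exp (8 * T * R) := by
    intro z hz
    calc ‖h z‖ ≤ ∑ m ∈ Finset.range n, ‖divDiff f a 0 m (a m) * ∏ j ∈ Finset.range m, (z - a j)‖ :=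
          norm_sum_le _ _
      _ ≤ ∑ m ∈ Finset.range n, E * ((8 * T * R) ^ m / m.factorial) := by
          apply Finset.sum_le_sum
          intro m hm
          rw [Finset.mem_range] at hm
          have h1 := norm_divDiff_le hf hT A hE m 0 (by omega)
          simp only [zero_add] at h1
          have h2 : ‖∏ j ∈ Finset.range m, (z - a j)‖ ≤ (2 * R) ^ m := by
            rw [norm_prod]
            calc _ ≤ ∏ j ∈ Finset.range m, (2 * R) := by
                  apply Finset.prod_le_prod (fun _ _ => norm_nonneg _)
                  intro j hj
                  rw [Finset.mem_range] at hj
                  have := hanorm j (by omega)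
                  have := norm_sub_le z (a j)
                  linarith
              _ = _ := by simp
          rw [norm_mul]
          calc _ ≤ (E * ((4 * T : ℝ) ^ m / m.factorial)) * (2 * R) ^ m := by
                apply mul_le_mul h1 h2 (norm_nonneg _) (by positivity)
            _ = _ := by
                rw [show (8 * T * R : ℝ) = (4 * T) * (2 * R) by ring, mul_pow (4 * T : ℝ)]
                ring
      _ = E * ∑ m ∈ Finset.range n, ((8 * T * R) ^ m / m.factorial) := by rw [Finset.mul_sum]
      _ ≤ _ := by
          apply mul_le_mul_of_nonneg_left _ hE0
          exact Real.sum_le_exp_of_nonneg (by positivity) n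
  set g := divDiff f a 0 n with hg
  have hgd : Differentiable ℂ g := differentiable_divDiff hf a 0 n
  have hfz : ∀ z, f z = h z + g z * ∏ j ∈ Finset.range n, (z - a j) := newton_expansion f a n
  set M' := (M + E * Real.exp (8 * T * R)) / (R / 2) ^ n with hM'
  have hgM : ∀ z : ℂ, ‖z‖ = R → ‖g z‖ ≤ M' := by
    intro z hz
    have h1 : (R / 2) ^ n ≤ ‖∏ j ∈ Finset.range n, (z - a j)‖ := by
      rw [norm_prod]
      calc (R / 2) ^ n = ∏ j ∈ Finset.range n, (R / 2) := by rw [Finset.prod_const, Finset.card_range]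
        _ ≤ _ := by
          apply Finset.prod_le_prod (fun _ _ => by positivity)
          intro j hj
          rw [Finset.mem_range] at hj
          have := hanorm j (by omega)
          have := norm_sub_norm_le z (a j)
          linarith
    rw [hM', le_div_iff₀ (by positivity)]
    calc ‖g z‖ * (R / 2) ^ n ≤ ‖g z‖ * ‖∏ j ∈ Finset.range n, (z - a j)‖ := by gcongr
      _ = ‖f z - h z‖ := by rw [← norm_mul, hfz z]; congr 1; ring
      _ ≤ ‖f z‖ + ‖h z‖ := norm_sub_le _ _
      _ ≤ _ := add_le_add (hM z hz) (hhle z hz.le)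
  have hgx : ‖g x‖ ≤ M' := by
    refine Complex.norm_le_of_forall_mem_frontier_norm_le (U := Metric.ball 0 R)
      Metric.isBounded_ball hgd.diffContOnCl ?_ ?_
    · intro z hz
      rw [frontier_ball _ hR0.ne'] at hz
      exact hgM z (by simpa using hz)
    · apply subset_closure
      simp only [Metric.mem_ball, dist_zero_right]
      linarith
  have hprod : ‖∏ j ∈ Finset.range n, (x - a j)‖ ≤ (2 * X) ^ n := by
    rw [norm_prod]
    calc _ ≤ ∏ j ∈ Finset.range n, (2 * X) := by
          apply Finset.prod_le_prod (fun _ _ => norm_nonneg _)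
          intro j hj
          rw [Finset.mem_range] at hj
          have := hanorm j (by omega)
          have := norm_sub_le x (a j)
          linarith
      _ = _ := by simp
  have hM0 : 0 ≤ M := (norm_nonneg _).trans (hM (R : ℂ) (by simp [abs_of_pos hR0]))
  have hratio : (4 * X / R) ^ n ≤ 1 := pow_le_one₀ (by positivity) ((div_le_one hR0).2 hR)
  have hEe : 0 ≤ E * Real.exp (8 * T * R) := by positivity
  rw [hfz x]
  calc _ ≤ ‖h x‖ + ‖g x‖ * ‖∏ j ∈ Finset.range n, (x - a j)‖ := by
        rw [← norm_mul]; exact norm_add_le _ _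
    _ ≤ E * Real.exp (8 * T * R) + M' * (2 * X) ^ n := by
        apply add_le_add (hhle x (by linarith))
        apply mul_le_mul hgx hprod (norm_nonneg _)
        exact (norm_nonneg _).trans hgx
    _ = E * Real.exp (8 * T * R) + (4 * X / R) ^ n * (M + E * Real.exp (8 * T * R)) := by
        rw [hM', show (4 * X / R) = (2 * X) / (R / 2) by field_simp; norm_num, div_pow (2 * X)]
        ring
    _ ≤ _ := by nlinarith

/-! ### Fel'dman polynomials -/

open Polynomial in
/-- The binomial coefficient polynomial `X (X - 1) ⋯ (X - k + 1) / k!`. -/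
noncomputable def choosePoly (k : ℕ) : ℂ[X] :=
  ∏ r ∈ Finset.range k, (C (1 / ((r : ℂ) + 1)) * (X - C (r : ℂ)))

open Polynomial in
/-- Fel'dman's polynomial of degree `n` and block size `S`: the product of a power of
`choosePoly S` with a binomial polynomial of degree less than `S`. Its derivatives at integers
have denominators controlled by `lcm (1, …, S)` although its degree may exceed `S`. -/
noncomputable def feldPoly (S n : ℕ) : ℂ[X] :=
  choosePoly (n % S) * choosePoly S ^ (n / S)

open Polynomial in
lemma prod_sub_pascal (y : ℂ[X]) (k : ℕ) :
    ∏ r ∈ Finset.range (k + 1), (C (1 / ((r : ℂ) + 1)) * (y + 1 - C (r : ℂ))) =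
      ∏ r ∈ Finset.range (k + 1), (C (1 / ((r : ℂ) + 1)) * (y - C (r : ℂ))) +
      ∏ r ∈ Finset.range k, (C (1 / ((r : ℂ) + 1)) * (y - C (r : ℂ))) := by
  have h1 : ∏ r ∈ Finset.range (k + 1), (y + 1 - C (r : ℂ)) =
      (y + 1) * ∏ r ∈ Finset.range k, (y - C (r : ℂ)) := by
    rw [Finset.prod_range_succ']
    have : ∀ r ∈ Finset.range k, y + 1 - C ((r + 1 : ℕ) : ℂ) = y - C (r : ℂ) := by
      intro r _
      push_cast
      rw [C_add, C_1]
      ring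
    rw [Finset.prod_congr rfl this]
    simp [mul_comm]
  have hk : (C (1 / ((k : ℂ) + 1)) : ℂ[X]) * (C (k : ℂ) + 1) = 1 := by
    rw [← C_1, ← C_add, ← C_mul, one_div_mul_cancel (Nat.cast_add_one_ne_zero k)]
  rw [Finset.prod_mul_distrib, h1, Finset.prod_mul_distrib, Finset.prod_mul_distrib,
    Finset.prod_range_succ, Finset.prod_range_succ]
  linear_combination (∏ r ∈ Finset.range k, (C (1 / ((r : ℂ) + 1)) : ℂ[X])) *
    (∏ r ∈ Finset.range k, (y - C (r : ℂ))) * hk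

open Polynomial in
lemma prod_zero_lifts (D k : ℕ) (hD : ∀ j, 1 ≤ j → j ≤ k → j ∣ D) :
    ∏ r ∈ Finset.range k, (C (1 / ((r : ℂ) + 1)) * ((C (D : ℂ) * X : ℂ[X]) - C (r : ℂ))) ∈
      lifts (Int.castRingHom ℂ) := by
  have hmul : ∀ j, 1 ≤ j → j ≤ k → (C ((D : ℂ) / j) * X : ℂ[X]) ∈ lifts (Int.castRingHom ℂ) := by
    intro j h1 h2
    obtain ⟨e, he⟩ := hD j h1 h2
    have hj : (j : ℂ) ≠ 0 := by exact_mod_cast (by omega : j ≠ 0)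
    refine ⟨C (e : ℤ) * X, ?_⟩
    simp only [coe_mapRingHom, Polynomial.map_mul, map_C, map_X, he]
    congr 2
    push_cast
    field_simp
    simp
  have hone : (1 : ℂ[X]) ∈ lifts (Int.castRingHom ℂ) := one_mem _
  have hneg : (-1 : ℂ[X]) ∈ lifts (Int.castRingHom ℂ) := ⟨-1, by simp⟩
  rcases k with _ | k
  · simp
  -- moving the denominators one step to the right turns each factor into an integral one
  have key : ∀ m, ∏ r ∈ Finset.range (m + 1),
      (C (1 / ((r : ℂ) + 1)) * ((C (D : ℂ) * X : ℂ[X]) - C (r : ℂ))) =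
      C ((D : ℂ) / ((m + 1 : ℕ) : ℂ)) * X *
        ∏ r ∈ Finset.range m, (C ((D : ℂ) / ((r + 1 : ℕ) : ℂ)) * X + (-1)) := by
    intro m
    induction m with
    | zero => simp
    | succ m ih =>
      rw [Finset.prod_range_succ, ih, Finset.prod_range_succ]
      have h1 : (C ((D : ℂ) / ((m + 1 : ℕ) : ℂ)) : ℂ[X]) =
        C (D : ℂ) * C (1 / ((m + 1 : ℕ) : ℂ)) := by rw [← C_mul]; ring_nf
      have h2 : (C ((D : ℂ) / ((m + 1 + 1 : ℕ) : ℂ)) : ℂ[X]) =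
        C (D : ℂ) * C (1 / ((m + 1 : ℕ) + 1 : ℂ)) := by rw [← C_mul]; push_cast; ring_nf
      have h3 : (C (1 / ((m + 1 : ℕ) : ℂ)) : ℂ[X]) * C ((m + 1 : ℕ) : ℂ) = 1 := by
        rw [← C_mul, one_div_mul_cancel (by exact_mod_cast Nat.succ_ne_zero m), C_1]
      rw [h1, h2]
      linear_combination (-1 * C (D : ℂ) * X * C (1 / ((m + 1 : ℕ) + 1 : ℂ)) *
        ∏ r ∈ Finset.range m, (C ((D : ℂ) / ((r + 1 : ℕ) : ℂ)) * X + (-1))) * h3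
  rw [key]
  refine mul_mem (hmul _ (by omega) le_rfl) (prod_mem ?_)
  intro r hr
  rw [Finset.mem_range] at hr
  exact add_mem (hmul _ (by omega) (by omega)) hneg

open Polynomial in
/-- `choosePoly k (s + D X)` has integer coefficients when `1, …, k` all divide `D`: the case
`s = 0` is explicit, and Pascal's rule moves from `s` to `s + 1`. -/
lemma choosePoly_comp_lifts (D s k : ℕ) (hD : ∀ j, 1 ≤ j → j ≤ k → j ∣ D) :
    (choosePoly k).comp (C (s : ℂ) + C (D : ℂ) * X) ∈ lifts (Int.castRingHom ℂ) := by
  have e : ∀ (k : ℕ) (y : ℂ[X]), (choosePoly k).comp y =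
      ∏ r ∈ Finset.range k, (C (1 / ((r : ℂ) + 1)) * (y - C (r : ℂ))) := by
    intro k y
    simp only [choosePoly, prod_comp, mul_comp, sub_comp, C_comp, X_comp]
  induction s generalizing k with
  | zero =>
    rw [e]
    have := prod_zero_lifts D k hD
    simpa using this
  | succ s ih =>
    rcases k with _ | k
    · simp [choosePoly]
    have h : (C ((s + 1 : ℕ) : ℂ) + C (D : ℂ) * X : ℂ[X]) = (C (s : ℂ) + C (D : ℂ) * X) + 1 := by
      push_cast
      rw [C_add, C_1]
      ring
    rw [h, e, prod_sub_pascal, ← e, ← e]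
    exact add_mem (ih _ hD) (ih k fun j h1 h2 => hD j h1 (by omega))

open Polynomial in
lemma feldPoly_integral (D S n : ℕ) (hS : 0 < S) (hD : ∀ j, 1 ≤ j → j ≤ S → j ∣ D) (t s : ℕ) :
    ∃ e : ℤ, (D : ℂ) ^ t * (derivative^[t] (feldPoly S n)).eval (s : ℂ) = e := by
  have h : (feldPoly S n).comp (C (s : ℂ) + C (D : ℂ) * X) ∈ lifts (Int.castRingHom ℂ) := by
    rw [feldPoly, mul_comp, pow_comp]
    refine mul_mem (choosePoly_comp_lifts D s _ fun j h1 h2 => hD j h1 ?_)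
      (pow_mem (choosePoly_comp_lifts D s _ hD) _)
    exact h2.trans (Nat.mod_lt _ hS).le
  rw [lifts_iff_coeff_lifts] at h
  obtain ⟨e, he⟩ := h t
  have h2 : (feldPoly S n).comp (C (s : ℂ) + C (D : ℂ) * X) =
      (taylor (s : ℂ) (feldPoly S n)).comp (C (D : ℂ) * X) := by
    rw [taylor_apply, comp_assoc]
    simp [add_comm]
  rw [h2, comp_C_mul_X_coeff, taylor_coeff] at he
  refine ⟨t.factorial * e, ?_⟩
  rw [← factorial_smul_hasseDeriv]
  simp only [eq_intCast] at he
  push_cast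
  rw [he]
  simp
  ring

open Polynomial in
lemma choosePoly_degree (k : ℕ) : (choosePoly k).degree = k := by
  rw [choosePoly, degree_prod]
  have : ∀ r ∈ Finset.range k, (C (1 / ((r : ℂ) + 1)) * (X - C (r : ℂ)) : ℂ[X]).degree = 1 := by
    intro r _
    rw [degree_mul, degree_X_sub_C, degree_C (one_div_ne_zero (Nat.cast_add_one_ne_zero r))]
    simp
  rw [Finset.sum_congr rfl this]
  simp

open Polynomial in
lemma feldPoly_degree (S n : ℕ) : (feldPoly S n).degree = n := by
  rw [feldPoly, degree_mul, degree_pow, choosePoly_degree, choosePoly_degree, nsmul_eq_mul]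
  have := Nat.mod_add_div' n S
  exact_mod_cast this

lemma norm_choosePoly_eval_le (k : ℕ) (z : ℂ) :
    ‖(choosePoly k).eval z‖ ≤ Real.exp (‖z‖ + k) := by
  rw [choosePoly, Polynomial.eval_prod, norm_prod]
  calc _ ≤ ∏ r ∈ Finset.range k, ((‖z‖ + k) * (1 / ((r : ℝ) + 1))) := by
        apply Finset.prod_le_prod (fun _ _ => norm_nonneg _)
        intro r hr
        rw [Finset.mem_range] at hr
        have h1 : ‖z - r‖ ≤ ‖z‖ + k := by
          have := norm_sub_le z (r : ℂ)
          rw [Complex.norm_natCast] at this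
          have : (r : ℝ) ≤ k := by exact_mod_cast hr.le
          linarith
        have h2 : ‖(1 / ((r : ℂ) + 1))‖ = 1 / ((r : ℝ) + 1) := by
          rw [norm_div, norm_one]
          congr 1
          exact_mod_cast Complex.norm_natCast (r + 1)
        simp only [Polynomial.eval_mul, Polynomial.eval_C, Polynomial.eval_sub,
          Polynomial.eval_X, norm_mul]
        rw [h2, mul_comm]
        gcongr
    _ = (‖z‖ + k) ^ k / k.factorial := by
        rw [Finset.prod_mul_distrib, Finset.prod_const, Finset.card_range, Finset.prod_div_distrib,
          ← Finset.prod_range_add_one_eq_factorial]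
        push_cast
        simp
        ring
    _ ≤ _ := Real.pow_div_factorial_le_exp _ (by positivity) _

lemma norm_feldPoly_eval_le {S l n : ℕ} (hn : n < S * l) (z : ℂ) :
    ‖(feldPoly S n).eval z‖ ≤ Real.exp ((‖z‖ + S) * l) := by
  have hS : 0 < S := Nat.pos_of_mul_pos_right (by omega : 0 < S * l)
  have hl : n / S + 1 ≤ l := Nat.div_lt_of_lt_mul hn
  rw [feldPoly, Polynomial.eval_mul, Polynomial.eval_pow, norm_mul, norm_pow]
  calc _ ≤ Real.exp (‖z‖ + S) * Real.exp (‖z‖ + S) ^ (n / S) := by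
        gcongr
        · refine (norm_choosePoly_eval_le _ z).trans (Real.exp_le_exp.2 ?_)
          have : ((n % S : ℕ) : ℝ) ≤ S := by exact_mod_cast (Nat.mod_lt n hS).le
          linarith
        · exact norm_choosePoly_eval_le _ z
    _ = Real.exp ((‖z‖ + S) * ((n / S + 1 : ℕ) : ℝ)) := by
        rw [← Real.exp_nat_mul, ← Real.exp_add]
        push_cast
        ring_nf
    _ ≤ _ := by
        apply Real.exp_le_exp.2
        have : ((n / S + 1 : ℕ) : ℝ) ≤ l := by exact_mod_cast hl
        gcongr

open Polynomial in
/-- Cauchy's estimate on a disc of radius one. -/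
lemma norm_derivative_feldPoly_le {S l n : ℕ} (hn : n < S * l) (t : ℕ) {z : ℂ} {R : ℝ}
    (hz : ‖z‖ ≤ R) :
    ‖(derivative^[t] (feldPoly S n)).eval z‖ ≤ t.factorial * Real.exp ((R + 1 + S) * l) := by
  have h1 : ∀ (t : ℕ) (P : ℂ[X]), iteratedDeriv t (fun x => P.eval x) =
      fun x => (derivative^[t] P).eval x := by
    intro t
    induction t with
    | zero => intro P; simp
    | succ t ih =>
      intro P
      rw [iteratedDeriv_succ']
      have : deriv (fun x => P.eval x) = fun x => P.derivative.eval x := by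
        funext x; simp
      rw [this, ih, Function.iterate_succ_apply]
  have h2 := Complex.norm_iteratedDeriv_le_of_forall_mem_sphere_norm_le (c := z) (R := 1)
    (C := Real.exp ((R + 1 + S) * l)) (f := fun x => (feldPoly S n).eval x) t one_pos
    (feldPoly S n).differentiable.diffContOnCl (by
      intro w hw
      refine (norm_feldPoly_eval_le hn w).trans (Real.exp_le_exp.2 ?_)
      have : ‖w‖ ≤ R + 1 := by
        have h3 : ‖w - z‖ = 1 := by simpa [dist_eq_norm] using hw
        have := norm_add_le (w - z) z
        rw [sub_add_cancel] at this
        linarith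
      gcongr)
  rw [h1] at h2
  simpa using h2

/-! ### Zeros of exponential polynomials along consecutive integers -/

open Polynomial in
/-- An exponential polynomial sequence `s ↦ ∑ Q_i(s) w_i ^ s`, with `deg Q_i < d_i` and distinct
nonzero `w_i`, vanishes identically once it vanishes at `∑ d_i` consecutive integers. Applying
the operator `u(s) ↦ u(s + 1) - w_j u(s)` lowers `d_j` by one. -/
lemma expPoly_zero {ι : Type*} [Fintype ι] [DecidableEq ι] (w : ι → ℂ)
    (hw : Function.Injective w) (hw0 : ∀ i, w i ≠ 0) (N : ℕ) :
    ∀ (d : ι → ℕ) (Q : ι → ℂ[X]), (∀ i, (Q i).degree < d i) → ∑ i, d i = N →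
      (∀ s < N, ∑ i, (Q i).eval (s : ℂ) * w i ^ s = 0) → ∀ i, Q i = 0 := by
  induction N with
  | zero =>
    intro d Q hd hN _ i
    have : d i = 0 := (Finset.sum_eq_zero_iff.1 hN) i (Finset.mem_univ _)
    have h := hd i
    rw [this] at h
    simpa [Nat.WithBot.lt_zero_iff] using h
  | succ N ih =>
    intro d Q hd hN hz
    obtain ⟨j, hj⟩ : ∃ j, d j ≠ 0 := by
      by_contra! h
      simp [h] at hN
    set Q' : ι → ℂ[X] := fun i => C (w i) * (Q i).comp (X + 1) - C (w j) * Q i with hQ'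
    have hcd : ∀ i, ((Q i).comp (X + 1)).degree = (Q i).degree := by
      intro i
      have := degree_taylor (Q i) (1 : ℂ)
      rwa [taylor_apply, C_1] at this
    have hcl : ∀ i, ((Q i).comp (X + 1)).leadingCoeff = (Q i).leadingCoeff := by
      intro i
      have := leadingCoeff_taylor (1 : ℂ) (Q i)
      rwa [taylor_apply, C_1] at this
    have hQ0 : ∀ i, Q' i = 0 := by
      refine ih (Function.update d j (d j - 1)) Q' ?_ ?_ ?_
      · intro i
        by_cases hij : i = j
        · subst hij
          rw [Function.update_self]
          by_cases hq : Q i = 0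
          · simp [hQ', hq]
          have e : Q' i = C (w i) * ((Q i).comp (X + 1) - Q i) := by simp only [hQ']; ring
          have h1 : ((Q i).comp (X + 1) - Q i).degree < (Q i).degree := by
            rw [← hcd i]
            apply degree_sub_lt_left (hcd i)
            · intro h0
              have := hcd i
              rw [h0, degree_zero] at this
              exact hq (degree_eq_bot.1 this.symm)
            · exact hcl i
          have h3 := hd i
          rw [e, degree_mul, degree_C (hw0 i), zero_add]
          rw [degree_eq_natDegree hq] at h1 h3
          have h4 : (Q i).natDegree < d i := by exact_mod_cast h3
          refine h1.trans_le ?_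
          exact_mod_cast (by omega : (Q i).natDegree ≤ d i - 1)
        · rw [Function.update_of_ne hij]
          refine (degree_sub_le _ _).trans_lt (max_lt ?_ ?_)
          · rw [degree_mul, degree_C (hw0 i), zero_add, hcd]
            exact hd i
          · rw [degree_mul, degree_C (hw0 j), zero_add]
            exact hd i
      · have h1 := Finset.add_sum_erase Finset.univ d (Finset.mem_univ j)
        have h2 := Finset.add_sum_erase Finset.univ (Function.update d j (d j - 1))
          (Finset.mem_univ j)
        have h3 : ∑ i ∈ Finset.univ.erase j, Function.update d j (d j - 1) i =
            ∑ i ∈ Finset.univ.erase j, d i := by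
          apply Finset.sum_congr rfl
          intro i hi
          rw [Function.update_of_ne (Finset.ne_of_mem_erase hi)]
        rw [h3, Function.update_self] at h2
        omega
      · intro s hs
        have h1 := hz (s + 1) (by omega)
        have h2 := hz s (by omega)
        have : ∑ i, (Q' i).eval (s : ℂ) * w i ^ s =
            ∑ i, (Q i).eval ((s + 1 : ℕ) : ℂ) * w i ^ (s + 1) -
              w j * ∑ i, (Q i).eval (s : ℂ) * w i ^ s := by
          rw [Finset.mul_sum, ← Finset.sum_sub_distrib]
          apply Finset.sum_congr rfl
          intro i _
          simp only [hQ', eval_sub, eval_mul, eval_C, eval_comp, eval_add, eval_X, eval_one]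
          push_cast
          ring
        rw [this, h1, h2]
        simp
    have hne : ∀ i, i ≠ j → Q i = 0 := by
      intro i hij
      by_contra hq
      have h1 : C (w i) * (Q i).comp (X + 1) = C (w j) * Q i := sub_eq_zero.1 (hQ0 i)
      have h2 := congrArg leadingCoeff h1
      rw [leadingCoeff_mul, leadingCoeff_mul, leadingCoeff_C, leadingCoeff_C, hcl] at h2
      exact hij (hw (mul_right_cancel₀ (leadingCoeff_ne_zero.2 hq) h2))
    have hjj : Q j = 0 := by
      have h1 : C (w j) * (Q j).comp (X + 1) = C (w j) * Q j := sub_eq_zero.1 (hQ0 j)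
      have h2 : (Q j).comp (X + 1) = Q j := mul_left_cancel₀ (C_ne_zero.2 (hw0 j)) h1
      have h0 : (Q j).eval 0 = 0 := by
        have := hz 0 (by omega)
        rw [Finset.sum_eq_single j] at this
        · simpa using this
        · intro i _ hij
          simp [hne i hij]
        · simp
      have h3 : ∀ n : ℕ, (Q j).eval (n : ℂ) = 0 := by
        intro n
        induction n with
        | zero => simpa using h0
        | succ n ihn =>
          rw [← ihn]
          nth_rw 2 [← h2]
          simp
      apply eq_zero_of_infinite_isRoot
      apply Set.Infinite.mono (s := Set.range (fun n : ℕ => (n : ℂ)))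
      · rintro _ ⟨n, rfl⟩
        exact h3 n
      · exact Set.infinite_range_of_injective Nat.cast_injective
    intro i
    by_cases hij : i = j
    · rw [hij]; exact hjj
    · exact hne i hij

open Polynomial in
/-- The auxiliary sequence does not vanish at too many consecutive integers. -/
lemma feld_zero_estimate {ι : Type*} [Fintype ι] [DecidableEq ι] (w : ι → ℂ)
    (hw : Function.Injective w) (hw0 : ∀ i, w i ≠ 0) (S n : ℕ)
    (c : Fin n × ι → ℂ)
    (hz : ∀ s < n * Fintype.card ι,
      ∑ i, c i * (feldPoly S i.1).eval (s : ℂ) * w i.2 ^ s = 0) : c = 0 := by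
  have h := expPoly_zero w hw hw0 (n * Fintype.card ι) (fun _ => n)
    (fun j => ∑ a : Fin n, c (a, j) • feldPoly S a) (by
      intro j
      refine (degree_sum_le _ _).trans_lt ?_
      rw [Finset.sup_lt_iff (by exact_mod_cast WithBot.bot_lt_coe n)]
      intro a _
      refine (degree_smul_le _ _).trans_lt ?_
      rw [feldPoly_degree]
      exact_mod_cast a.2) (by simp [mul_comm]) (by
      intro s hs
      rw [← hz s hs, Fintype.sum_prod_type, Finset.sum_comm]
      apply Finset.sum_congr rfl
      intro j _
      rw [eval_finsetSum, Finset.sum_mul]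
      simp)
  have hli := (Sequence.linearIndependent (⟨feldPoly S, feldPoly_degree S⟩ : Sequence ℂ)).comp
    (fun a : Fin n => (a : ℕ)) Fin.val_injective
  rw [Fintype.linearIndependent_iff] at hli
  funext i
  exact hli (fun a => c (a, i.2)) (h i.2) i.1

/-! ### The auxiliary function -/

open Polynomial in
/-- The common shape of the auxiliary function and its values: the exponentials are replaced by
arbitrary numbers `g`, `t` counts derivatives of the polynomial parts, and `u` counts derivatives
of the exponential parts, whose frequencies are proportional to the integers `v`. -/
noncomputable def auxSum {ι : Type*} [Fintype ι] (S : ℕ) {n : ℕ} (v : ι → ℕ) (c : Fin n × ι → ℤ)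
    (t u : ℕ) (z : ℂ) (g : ι → ℂ) : ℂ :=
  ∑ i, (c i : ℂ) * (derivative^[t] (feldPoly S i.1)).eval z * (v i.2 : ℂ) ^ u * g i.2

/-- The auxiliary function, with frequencies `v j * η`. -/
noncomputable def auxFun {ι : Type*} [Fintype ι] (S : ℕ) {n : ℕ} (v : ι → ℕ) (c : Fin n × ι → ℤ)
    (η : ℂ) (t u : ℕ) (z : ℂ) : ℂ :=
  auxSum S v c t u z (fun j => Complex.exp (v j * η * z))

lemma hasDerivAt_auxFun {ι : Type*} [Fintype ι] (S : ℕ) {n : ℕ} (v : ι → ℕ) (c : Fin n × ι → ℤ)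
    (η : ℂ) (t u : ℕ) (z : ℂ) :
    HasDerivAt (auxFun S v c η t u)
      (auxFun S v c η (t + 1) u z + η * auxFun S v c η t (u + 1) z) z := by
  have h : ∀ i : Fin n × ι, HasDerivAt (fun z : ℂ => (c i : ℂ) *
      (Polynomial.derivative^[t] (feldPoly S i.1)).eval z * (v i.2 : ℂ) ^ u *
        Complex.exp (v i.2 * η * z))
      ((c i : ℂ) * (Polynomial.derivative^[t + 1] (feldPoly S i.1)).eval z * (v i.2 : ℂ) ^ u *
        Complex.exp (v i.2 * η * z) + η * ((c i : ℂ) *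
        (Polynomial.derivative^[t] (feldPoly S i.1)).eval z * (v i.2 : ℂ) ^ (u + 1) *
        Complex.exp (v i.2 * η * z))) z := by
    intro i
    have h1 := (Polynomial.derivative^[t] (feldPoly S i.1)).hasDerivAt z
    have h2 : HasDerivAt (fun z : ℂ => Complex.exp (v i.2 * η * z))
        (Complex.exp (v i.2 * η * z) * (v i.2 * η)) z := by
      have := ((hasDerivAt_id z).const_mul ((v i.2 : ℂ) * η)).cexp
      simpa using this
    have h3 := ((h1.const_mul (c i : ℂ)).mul_const ((v i.2 : ℂ) ^ u)).mul h2
    exact h3.congr_deriv (by rw [Function.iterate_succ_apply']; ring)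
  have := HasDerivAt.fun_sum (u := Finset.univ) (fun i _ => h i)
  exact this.congr_deriv (by
    simp only [auxFun, auxSum, Finset.mul_sum]
    rw [← Finset.sum_add_distrib])

lemma differentiable_auxFun {ι : Type*} [Fintype ι] (S : ℕ) {n : ℕ} (v : ι → ℕ)
    (c : Fin n × ι → ℤ) (η : ℂ) (t u : ℕ) : Differentiable ℂ (auxFun S v c η t u) :=
  fun z => (hasDerivAt_auxFun S v c η t u z).differentiableAt

lemma norm_iteratedDeriv_auxFun_le {ι : Type*} [Fintype ι] (S : ℕ) {n : ℕ} (v : ι → ℕ)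
    (c : Fin n × ι → ℤ) (η : ℂ) (z : ℂ) (E : ℝ) (m : ℕ) : ∀ t u : ℕ,
    (∀ t' ≤ t + m, ∀ u' ≤ u + m, ‖auxFun S v c η t' u' z‖ ≤ E) →
    ‖iteratedDeriv m (auxFun S v c η t u) z‖ ≤ (1 + ‖η‖) ^ m * E := by
  induction m with
  | zero => intro t u h; simpa using h t (by omega) u (by omega)
  | succ m ih =>
    intro t u h
    have h0 : deriv (auxFun S v c η t u) =
        auxFun S v c η (t + 1) u + fun z => η * auxFun S v c η t (u + 1) z := by
      funext z
      exact (hasDerivAt_auxFun S v c η t u z).deriv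
    have hc : ∀ t u, ContDiffAt ℂ m (auxFun S v c η t u) z := fun t u =>
      (differentiable_auxFun S v c η t u).contDiff.contDiffAt
    rw [iteratedDeriv_succ', h0, iteratedDeriv_add (hc _ _) (contDiffAt_const.mul (hc _ _)),
      iteratedDeriv_const_mul_field]
    have h1 := ih (t + 1) u (fun t' ht' u' hu' => h t' (by omega) u' (by omega))
    have h2 := ih t (u + 1) (fun t' ht' u' hu' => h t' (by omega) u' (by omega))
    calc _ ≤ _ := norm_add_le _ _
      _ ≤ (1 + ‖η‖) ^ m * E + ‖η‖ * ((1 + ‖η‖) ^ m * E) := by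
        rw [norm_mul]
        gcongr
      _ = _ := by ring

lemma norm_auxSum_le {ι : Type*} [Fintype ι] {S l : ℕ} (v : ι → ℕ) (c : Fin (S * l) × ι → ℤ)
    {Cb V G R : ℝ} {T : ℕ} (hc : ∀ i, |(c i : ℝ)| ≤ Cb) (hCb : 0 ≤ Cb) (hv : ∀ j, (v j : ℝ) ≤ V)
    (hV : 1 ≤ V) {t u : ℕ} (ht : t ≤ T) (hu : u ≤ T) {z : ℂ} (hz : ‖z‖ ≤ R) (g : ι → ℂ)
    (hg : ∀ j, ‖g j‖ ≤ G) :
    ‖auxSum S v c t u z g‖ ≤ (S * l * Fintype.card ι : ℕ) *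
      (Cb * (T.factorial * Real.exp ((R + 1 + S) * l)) * V ^ T * G) := by
  rw [auxSum]
  calc _ ≤ ∑ i : Fin (S * l) × ι,
        (Cb * (T.factorial * Real.exp ((R + 1 + S) * l)) * V ^ T * G) := by
        refine (norm_sum_le _ _).trans (Finset.sum_le_sum ?_)
        intro i _
        rw [norm_mul, norm_mul, norm_mul, norm_pow, Complex.norm_intCast, Complex.norm_natCast]
        have h1 := norm_derivative_feldPoly_le i.1.2 t hz
        have h2 : (t.factorial : ℝ) ≤ T.factorial := by exact_mod_cast Nat.factorial_le ht
        have h3 : (v i.2 : ℝ) ^ u ≤ V ^ T :=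
          (pow_le_pow_left₀ (by positivity) (hv i.2) u).trans (pow_le_pow_right₀ hV hu)
        have hV0 : 0 ≤ V := by linarith
        gcongr
        · exact hc i
        · exact h1.trans (by gcongr)
        · exact hg i.2
    _ = _ := by
        rw [Finset.sum_const, nsmul_eq_mul]
        simp

/-- The algebraic values of the auxiliary function become integers after multiplication by a
power of `D`. -/
lemma auxSum_integral {ι : Type*} [Fintype ι] {S n D : ℕ} (hS : 0 < S)
    (hD : ∀ j, 1 ≤ j → j ≤ S → j ∣ D) (v w : ι → ℕ) (c : Fin n × ι → ℤ) (t u s : ℕ) :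
    ∃ e : ℤ, (D : ℂ) ^ t * auxSum S v c t u s (fun j => (w j : ℂ) ^ s) = e := by
  choose e he using fun i : Fin n × ι => feldPoly_integral D S i.1 hS hD t s
  refine ⟨∑ i, c i * e i * v i.2 ^ u * w i.2 ^ s, ?_⟩
  rw [auxSum, Finset.mul_sum]
  push_cast
  apply Finset.sum_congr rfl
  intro i _
  rw [← he i]
  ring

attribute [local instance] Matrix.seminormedAddCommGroup

/-- Siegel's lemma applied to the vanishing conditions on the auxiliary function, with twice as
many unknowns as equations. -/
lemma exists_aux_coeffs {ι : Type*} [Fintype ι] {S l T D : ℕ} (hS : 0 < S) (hT : 0 < T)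
    (hD : ∀ j, 1 ≤ j → j ≤ S → j ∣ D) (hD1 : 1 ≤ D) (v w : ι → ℕ)
    (hcard : S * l * Fintype.card ι = 2 * (S * T * T)) {V W : ℝ} (hv : ∀ j, (v j : ℝ) ≤ V)
    (hV : 1 ≤ V) (hw : ∀ j, (w j : ℝ) ≤ W) (hW : 1 ≤ W) :
    ∃ c : Fin (S * l) × ι → ℤ, c ≠ 0 ∧
      (∀ s < S, ∀ t < T, ∀ u < T, auxSum S v c t u s (fun j => (w j : ℂ) ^ s) = 0) ∧
      ∀ i, |(c i : ℝ)| ≤ (S * l * Fintype.card ι : ℕ) *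
        ((D : ℝ) ^ T * (T.factorial * Real.exp ((2 * S) * l)) * V ^ T * W ^ S) := by
  classical
  choose e he using fun (i : Fin (S * l) × ι) (t s : ℕ) =>
    feldPoly_integral D S i.1 hS hD t s
  set A : Matrix (Fin S × Fin T × Fin T) (Fin (S * l) × ι) ℤ :=
    fun r i => e i r.2.1 r.1 * v i.2 ^ (r.2.2 : ℕ) * w i.2 ^ (r.1 : ℕ) with hA
  set Bd : ℝ := (D : ℝ) ^ T * (T.factorial * Real.exp ((2 * S) * l)) * V ^ T * W ^ S with hBd
  have hD1' : (1 : ℝ) ≤ D := by exact_mod_cast hD1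
  have hBd1 : 1 ≤ Bd := by
    have h1 : (1 : ℝ) ≤ (D : ℝ) ^ T := one_le_pow₀ hD1'
    have h2 : (1 : ℝ) ≤ T.factorial := by exact_mod_cast Nat.factorial_pos T
    have h3 : (1 : ℝ) ≤ Real.exp ((2 * S) * l) := Real.one_le_exp (by positivity)
    have h4 : (1 : ℝ) ≤ V ^ T := one_le_pow₀ hV
    have h5 : (1 : ℝ) ≤ W ^ S := one_le_pow₀ hW
    exact one_le_mul_of_one_le_of_one_le (one_le_mul_of_one_le_of_one_le
      (one_le_mul_of_one_le_of_one_le h1 (one_le_mul_of_one_le_of_one_le h2 h3)) h4) h5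
  have hAle : ‖A‖ ≤ Bd := by
    rw [Matrix.norm_le_iff (by linarith)]
    intro r i
    obtain ⟨s, t, u⟩ := r
    have h1 : ‖((e i t s : ℤ) : ℂ)‖ ≤ (D : ℝ) ^ T * (T.factorial * Real.exp ((2 * S) * l)) := by
      rw [← he i t s, norm_mul, norm_pow, Complex.norm_natCast]
      have hs1 : (s : ℝ) + 1 ≤ S := by exact_mod_cast s.2
      have h2 := norm_derivative_feldPoly_le i.1.2 t (z := ((s : ℕ) : ℂ)) (R := (s : ℕ))
        (by rw [Complex.norm_natCast])
      have h3 : (t.1.factorial : ℝ) ≤ T.factorial := by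
        exact_mod_cast Nat.factorial_le t.2.le
      have h4 : Real.exp (((s : ℕ) + 1 + S) * l) ≤ Real.exp ((2 * S) * l) := by
        apply Real.exp_le_exp.2
        gcongr
        linarith
      have h5 : (D : ℝ) ^ (t : ℕ) ≤ (D : ℝ) ^ T := pow_le_pow_right₀ hD1' t.2.le
      gcongr
      exact h2.trans (by gcongr)
    rw [Complex.norm_intCast] at h1
    have h6 : (v i.2 : ℝ) ^ (u : ℕ) ≤ V ^ T :=
      (pow_le_pow_left₀ (by positivity) (hv i.2) _).trans (pow_le_pow_right₀ hV u.2.le)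
    have h7 : (w i.2 : ℝ) ^ (s : ℕ) ≤ W ^ S :=
      (pow_le_pow_left₀ (by positivity) (hw i.2) _).trans (pow_le_pow_right₀ hW s.2.le)
    simp only [hA]
    rw [Int.norm_eq_abs]
    push_cast
    rw [abs_mul, abs_mul, abs_pow, abs_pow, Nat.abs_cast, Nat.abs_cast, hBd]
    have hV0 : 0 ≤ V := by linarith
    gcongr
  have c1 : Fintype.card (Fin S × Fin T × Fin T) = S * T * T := by simp [mul_assoc]
  have c2 : Fintype.card (Fin (S * l) × ι) = 2 * (S * T * T) := by
    rw [Fintype.card_prod, Fintype.card_fin, hcard]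
  have hpos : 0 < S * T * T := by positivity
  obtain ⟨c, hc0, hcA, hcn⟩ := Int.Matrix.exists_ne_zero_int_vec_norm_le A
    (by rw [c1, c2]; omega) (by rw [c1]; exact hpos)
  refine ⟨c, hc0, ?_, ?_⟩
  · intro s hs t ht u hu
    have h1 := congrFun hcA (⟨s, hs⟩, ⟨t, ht⟩, ⟨u, hu⟩)
    simp only [Matrix.mulVec, dotProduct, hA, Pi.zero_apply] at h1
    have h2 : (D : ℂ) ^ t * auxSum S v c t u s (fun j => (w j : ℂ) ^ s) = 0 := by
      rw [auxSum, Finset.mul_sum]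
      have h3 := congrArg (fun x : ℤ => (x : ℂ)) h1
      push_cast at h3
      rw [← h3]
      apply Finset.sum_congr rfl
      intro i _
      rw [← he i t s]
      ring
    have hD0 : (D : ℂ) ^ t ≠ 0 := pow_ne_zero _ (by exact_mod_cast (by omega : D ≠ 0))
    exact (mul_eq_zero.1 h2).resolve_left hD0
  · intro i
    have h1 : ‖c i‖ ≤ ‖c‖ := norm_le_pi_norm c i
    rw [Int.norm_eq_abs] at h1
    rw [c1, c2] at hcn
    have hexp : ((S * T * T : ℕ) : ℝ) / (((2 * (S * T * T) : ℕ) : ℝ) - ((S * T * T : ℕ) : ℝ)) = 1 := by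
      have : ((S * T * T : ℕ) : ℝ) ≠ 0 := by exact_mod_cast hpos.ne'
      rw [Nat.cast_mul 2]
      push_cast at this ⊢
      field_simp
      norm_num
    rw [hexp, Real.rpow_one] at hcn
    rw [hcard]
    refine h1.trans (hcn.trans ?_)
    gcongr
    exact max_le hBd1 hAle

/-- One extrapolation step: zeros at `0, …, A - 1` for orders below `2 T` propagate to
`0, …, X - 1` for orders below `T`, because the value is an integer up to a power of `D` and the
Schwarz lemma makes it smaller than one. -/
lemma extrapolation_step {ι : Type*} [Fintype ι] {S n D : ℕ} (hS : 0 < S)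
    (hD : ∀ j, 1 ≤ j → j ≤ S → j ∣ D) (hD1 : 1 ≤ D) (v w : ι → ℕ) (c : Fin n × ι → ℤ) (η : ℂ)
    {T A X : ℕ} {R M δ : ℝ} (hT : 0 < T) (hX : 0 < X) (hAX : A ≤ X) (hXR : 4 * (X : ℝ) ≤ R)
    (hM : ∀ t < T, ∀ u < T, ∀ z : ℂ, ‖z‖ = R → ‖auxFun S v c η t u z‖ ≤ M)
    (hδ : ∀ t < 2 * T, ∀ u < 2 * T, ∀ s < X,
      ‖auxFun S v c η t u (s : ℂ) - auxSum S v c t u s (fun j => (w j : ℂ) ^ s)‖ ≤ δ)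
    (hsmall : (D : ℝ) ^ T * ((4 * X / R) ^ (A * T) * M +
      δ * (1 + 2 * (1 + ‖η‖) ^ T * Real.exp (8 * T * R))) < 1)
    (hzero : ∀ s < A, ∀ t < 2 * T, ∀ u < 2 * T,
      auxSum S v c t u s (fun j => (w j : ℂ) ^ s) = 0) :
    ∀ s < X, ∀ t < T, ∀ u < T, auxSum S v c t u s (fun j => (w j : ℂ) ^ s) = 0 := by
  intro s hs t ht u hu
  have hδ0 : 0 ≤ δ := (norm_nonneg _).trans (hδ t (by omega) u (by omega) s hs)
  have hη1 : 1 ≤ 1 + ‖η‖ := by linarith [norm_nonneg η]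
  have h1 := approx_schwarz (differentiable_auxFun S v c η t u) hT (A := A)
    (E := (1 + ‖η‖) ^ T * δ) (M := M) (R := R) (X := X) (by
      intro r hr m hm
      refine (norm_iteratedDeriv_auxFun_le S v c η r δ m t u ?_).trans ?_
      · intro t' ht' u' hu'
        have h2 := hδ t' (by omega) u' (by omega) r (by omega)
        rwa [hzero r hr t' (by omega) u' (by omega), sub_zero] at h2
      · gcongr) (hM t ht u hu) (by positivity) (by exact_mod_cast hAX) hXR
      (by exact_mod_cast hX) (x := s) (by rw [Complex.norm_natCast]; exact_mod_cast hs.le)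
  have h2 := hδ t (by omega) u (by omega) s hs
  set a := auxSum S v c t u s (fun j => (w j : ℂ) ^ s) with ha
  obtain ⟨e, he⟩ := auxSum_integral hS hD v w c t u s
  rw [← ha] at he
  have hD1' : (1 : ℝ) ≤ D := by exact_mod_cast hD1
  have h3 : ‖a‖ ≤ (4 * X / R) ^ (A * T) * M +
      δ * (1 + 2 * (1 + ‖η‖) ^ T * Real.exp (8 * T * R)) := by
    have h4 : ‖a‖ ≤ ‖auxFun S v c η t u (s : ℂ)‖ + ‖auxFun S v c η t u (s : ℂ) - a‖ := by
      have := norm_sub_norm_le a (auxFun S v c η t u (s : ℂ))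
      rw [norm_sub_rev] at this
      linarith
    calc _ ≤ _ := h4
      _ ≤ _ := add_le_add h1 h2
      _ = _ := by ring
  have h5 : ‖(e : ℂ)‖ < 1 := by
    rw [← he, norm_mul, norm_pow, Complex.norm_natCast]
    calc (D : ℝ) ^ t * ‖a‖ ≤ (D : ℝ) ^ T * ‖a‖ := by
          gcongr
      _ ≤ _ := by gcongr
      _ < 1 := hsmall
  have h6 : e = 0 := by
    rw [Complex.norm_intCast] at h5
    have : |e| < 1 := by exact_mod_cast h5
    exact Int.abs_lt_one_iff.1 this
  rw [h6, Int.cast_zero] at he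
  have hD0 : (D : ℂ) ^ t ≠ 0 := pow_ne_zero _ (by exact_mod_cast (by omega : D ≠ 0))
  exact (mul_eq_zero.1 he).resolve_left hD0

/-! ### A lower bound for two logarithms -/

lemma coeff_estimate {S T l : ℕ} {N D F V W B : ℝ} (hT : 1 ≤ T) (hlT : l ≤ T)
    (hN : N ≤ Real.exp S) (hD0 : 0 ≤ D) (hD : D ≤ Real.exp (6 * S)) (hF0 : 0 ≤ F)
    (hV0 : 0 ≤ V) (hFV : F * V ^ T ≤ Real.exp (S + S * T)) (hW0 : 0 ≤ W)
    (hW : W ^ S ≤ Real.exp (B * S * T)) :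
    N * (D ^ T * (F * Real.exp ((2 * S) * l)) * V ^ T * W ^ S) ≤ Real.exp ((11 + B) * S * T) := by
  have hT' : (1 : ℝ) ≤ T := by exact_mod_cast hT
  have hlT' : (l : ℝ) ≤ T := by exact_mod_cast hlT
  have h1 : D ^ T ≤ Real.exp (6 * S * T) := by
    calc D ^ T ≤ Real.exp (6 * S) ^ T := by gcongr
      _ = _ := by rw [← Real.exp_nat_mul]; ring_nf
  calc N * (D ^ T * (F * Real.exp ((2 * S) * l)) * V ^ T * W ^ S)
      = N * D ^ T * (F * V ^ T) * Real.exp ((2 * S) * l) * W ^ S := by ring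
    _ ≤ Real.exp S * Real.exp (6 * S * T) * Real.exp (S + S * T) * Real.exp ((2 * S) * T) *
        Real.exp (B * S * T) := by gcongr
    _ = Real.exp (2 * S + (9 + B) * S * T) := by
        simp only [← Real.exp_add]
        congr 1
        ring
    _ ≤ _ := by
        apply Real.exp_le_exp.2
        have : (S : ℝ) * 1 ≤ S * T := by gcongr
        linarith

lemma value_estimate {S T l L : ℕ} {N F V Cb G R B : ℝ} (hS : 1 ≤ S) (hT : 1 ≤ T) (hlL : l ≤ L)
    (hN : N ≤ Real.exp S) (hF0 : 0 ≤ F)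
    (hV0 : 0 ≤ V) (hFV : F * V ^ T ≤ Real.exp (S + S * T)) (hCb0 : 0 ≤ Cb)
    (hCb : Cb ≤ Real.exp ((11 + B) * S * T)) (hR : (S : ℝ) ≤ R) (hG : 0 ≤ G) :
    N * (Cb * (F * Real.exp ((R + 1 + S) * l)) * V ^ T * G) ≤
      Real.exp ((14 + B) * S * T + 3 * L * R) * G := by
  have hT' : (1 : ℝ) ≤ T := by exact_mod_cast hT
  have hS' : (1 : ℝ) ≤ S := by exact_mod_cast hS
  have hlL' : (l : ℝ) ≤ L := by exact_mod_cast hlL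
  have h1 : (R + 1 + S) * l ≤ 3 * L * R := by
    calc (R + 1 + S) * l ≤ (R + R + R) * L := by
          gcongr <;> linarith
      _ = _ := by ring
  calc N * (Cb * (F * Real.exp ((R + 1 + S) * l)) * V ^ T * G)
      = N * Cb * (F * V ^ T) * Real.exp ((R + 1 + S) * l) * G := by ring
    _ ≤ Real.exp S * Real.exp ((11 + B) * S * T) * Real.exp (S + S * T) *
        Real.exp (3 * L * R) * G := by gcongr
    _ = Real.exp (2 * S + (12 + B) * S * T + 3 * L * R) * G := by
        simp only [← Real.exp_add]
        congr 2
        ring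
    _ ≤ _ := by
        gcongr
        have : (S : ℝ) * 1 ≤ S * T := by gcongr
        linarith

/-- The main term of one extrapolation step. -/
lemma main_term_estimate {S T T' n : ℕ} {D ρ B M LR : ℝ} (hD0 : 0 ≤ D)
    (hD : D ≤ Real.exp (6 * S)) (hB : 0 ≤ B) (hρ : 4 * Real.exp (39 + 3 * B) ≤ ρ) (hn : 1 ≤ n)
    (h1 : S * T' ≤ n) (h2 : S * T ≤ 2 * n) (h3 : LR ≤ n)
    (hM : M ≤ Real.exp ((14 + B) * S * T + (3 + B) * LR)) :
    D ^ T' * ((4 / ρ) ^ n * M) ≤ Real.exp (-2) := by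
  have h1' : (S : ℝ) * T' ≤ n := by exact_mod_cast h1
  have h2' : (S : ℝ) * T ≤ 2 * n := by exact_mod_cast h2
  have hn' : (1 : ℝ) ≤ n := by exact_mod_cast hn
  have hρ0 : 0 < ρ := lt_of_lt_of_le (by positivity) hρ
  have e1 : D ^ T' ≤ Real.exp (6 * n) := by
    calc D ^ T' ≤ Real.exp (6 * S) ^ T' := by gcongr
      _ = Real.exp (6 * (S * T')) := by rw [← Real.exp_nat_mul]; ring_nf
      _ ≤ _ := by gcongr
  have e2 : (4 / ρ) ^ n ≤ Real.exp (-(39 + 3 * B) * n) := by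
    calc (4 / ρ) ^ n ≤ Real.exp (-(39 + 3 * B)) ^ n := by
          gcongr
          rw [div_le_iff₀ hρ0, Real.exp_neg, ← div_eq_inv_mul, le_div_iff₀ (Real.exp_pos _)]
          exact hρ
      _ = _ := by rw [← Real.exp_nat_mul]; ring_nf
  have e3 : M ≤ Real.exp ((31 + 3 * B) * n) := by
    refine hM.trans (Real.exp_le_exp.2 ?_)
    have : (14 + B) * (S * T) ≤ (14 + B) * (2 * n) := by gcongr
    have : (3 + B) * LR ≤ (3 + B) * n := by gcongr
    linarith
  calc D ^ T' * ((4 / ρ) ^ n * M)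
      ≤ D ^ T' * ((4 / ρ) ^ n * Real.exp ((31 + 3 * B) * n)) := by gcongr
    _ ≤ Real.exp (6 * n) * (Real.exp (-(39 + 3 * B) * n) * Real.exp ((31 + 3 * B) * n)) := by
        gcongr
    _ = Real.exp (-2 * n) := by
        simp only [← Real.exp_add]
        congr 1
        ring
    _ ≤ _ := Real.exp_le_exp.2 (by linarith)

/-- The error term of one extrapolation step, coming from replacing `exp (v j * η)` by `w j`. -/
lemma error_term_estimate {S T T' : ℕ} {D h B R Rm : ℝ} (hS : 1 ≤ S) (hT : T' ≤ T) (hD1 : 1 ≤ D)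
    (hD : D ≤ Real.exp (6 * S)) (hh0 : 0 ≤ h) (hh : 1 + h ≤ B) (hR0 : 0 ≤ R) (hR : R ≤ Rm) :
    D ^ T' * (1 + 2 * (1 + h) ^ T' * Real.exp (8 * T' * R)) ≤
      Real.exp ((6 * T + 2 + B * T) * S + 8 * T * Rm) := by
  have hS' : (1 : ℝ) ≤ S := by exact_mod_cast hS
  have hT' : (T' : ℝ) ≤ T := by exact_mod_cast hT
  have hB : 0 ≤ B := by linarith
  have e1 : D ^ T' ≤ Real.exp (6 * T * S) := by
    calc D ^ T' ≤ D ^ T := pow_le_pow_right₀ hD1 hT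
      _ ≤ Real.exp (6 * S) ^ T := by gcongr
      _ = _ := by rw [← Real.exp_nat_mul]; ring_nf
  have e2 : (1 + h) ^ T' ≤ Real.exp (B * T) := by
    calc (1 + h) ^ T' ≤ (1 + h) ^ T := pow_le_pow_right₀ (by linarith) hT
      _ ≤ Real.exp B ^ T := by
        gcongr
        linarith [Real.add_one_le_exp B]
      _ = _ := by rw [← Real.exp_nat_mul]; ring_nf
  have e3 : Real.exp (8 * T' * R) ≤ Real.exp (8 * T * Rm) := by gcongr
  have e4 : (1 : ℝ) ≤ Real.exp (B * T) * Real.exp (8 * T * Rm) := by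
    rw [← Real.exp_add]
    exact Real.one_le_exp (by have := hR0.trans hR; positivity)
  have e5 : (3 : ℝ) ≤ Real.exp 2 := by linarith [Real.add_one_le_exp (2 : ℝ)]
  calc D ^ T' * (1 + 2 * (1 + h) ^ T' * Real.exp (8 * T' * R))
      ≤ Real.exp (6 * T * S) * (Real.exp (B * T) * Real.exp (8 * T * Rm) +
          2 * Real.exp (B * T) * Real.exp (8 * T * Rm)) := by gcongr
    _ = Real.exp (6 * T * S) * (3 * Real.exp (B * T) * Real.exp (8 * T * Rm)) := by ring
    _ ≤ Real.exp (6 * T * S) * (Real.exp 2 * Real.exp (B * T) * Real.exp (8 * T * Rm)) := by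
        gcongr
    _ = Real.exp (6 * T * S + 2 + B * T + 8 * T * Rm) := by
        simp only [← Real.exp_add]
        congr 1
        ring
    _ ≤ _ := by
        apply Real.exp_le_exp.2
        have : (2 + B * T) * 1 ≤ (2 + B * T) * S := by gcongr
        linarith

lemma lcmUpto_le_exp (S : ℕ) : ((Nat.lcmUpto S : ℕ) : ℝ) ≤ Real.exp (6 * S) := by
  have h0 : 0 < Nat.lcmUpto S := Nat.lcmUpto_pos S
  have h1 := Chebyshev.psi_eq_log_lcmUpto S
  have h2 := Chebyshev.psi_le_const_mul_self (x := (S : ℝ)) (by positivity)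
  have h3 : Real.log 4 ≤ 2 := by
    rw [Real.log_le_iff_le_exp (by norm_num)]
    have := Real.exp_one_gt_d9
    have h4 : Real.exp 2 = Real.exp 1 * Real.exp 1 := by rw [← Real.exp_add]; norm_num
    rw [h4]
    nlinarith
  rw [← Real.log_le_iff_le_exp (by exact_mod_cast h0), ← h1]
  refine h2.trans ?_
  gcongr
  linarith

lemma MultIndepPair.injective {p q : ℕ} (hp : 1 < p) (hq : 1 < q) (h : MultIndepPair p q) (L : ℕ) :
    Function.Injective
      (fun j : Fin L × Fin L => ((p ^ (j.1 : ℕ) * q ^ (j.2 : ℕ) : ℕ) : ℂ)) := by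
  rintro ⟨i, j⟩ ⟨i', j'⟩ hij
  have h1 : p ^ (i : ℕ) * q ^ (j : ℕ) = p ^ (i' : ℕ) * q ^ (j' : ℕ) := Nat.cast_injective hij
  have h2 : (p : ℝ) ^ (i : ℕ) * (q : ℝ) ^ (j : ℕ) = (p : ℝ) ^ (i' : ℕ) * (q : ℝ) ^ (j' : ℕ) := by
    exact_mod_cast h1
  have hp0 : (p : ℝ) ≠ 0 := by positivity
  have hq0 : (q : ℝ) ≠ 0 := by positivity
  have h3 := h ((i : ℕ) - (i' : ℕ)) ((j : ℕ) - (j' : ℕ)) (by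
    rw [zpow_sub₀ hp0, zpow_sub₀ hq0]
    simp only [zpow_natCast]
    rw [div_mul_div_comm, h2, div_self (by positivity)])
  ext
  · simp; omega
  · simp; omega

/-- The perturbation of the exponential values caused by the linear form `Λ`. -/
lemma exp_value_sub_le {p q a b L s i j : ℕ} {Λ Xm : ℝ} (hp : 1 < p) (hq : 1 < q) (hb : 1 ≤ b)
    (hΛ : Λ = a * Real.log p - b * Real.log q) (hi : i < L) (hj : j < L) (hs : (s : ℝ) ≤ Xm)
    (hsmall : L * Xm * |Λ| ≤ 1) :
    ‖Complex.exp (((i * b + j * a : ℕ) : ℂ) * ((Real.log p / b : ℝ) : ℂ) * (s : ℂ)) -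
      ((p ^ i * q ^ j : ℕ) : ℂ) ^ s‖ ≤
      Real.exp ((Real.log p + Real.log q + 1) * L * Xm) * (2 * L * Xm * |Λ|) := by
  have hb' : (1 : ℝ) ≤ b := by exact_mod_cast hb
  have hp0 : (0 : ℝ) < p := by positivity
  have hq0 : (0 : ℝ) < q := by positivity
  have hlp : 0 ≤ Real.log p := Real.log_natCast_nonneg p
  have hlq : 0 ≤ Real.log q := Real.log_natCast_nonneg q
  have hi' : (i : ℝ) ≤ L := by exact_mod_cast hi.le
  have hj' : (j : ℝ) ≤ L := by exact_mod_cast hj.le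
  have hs0 : (0 : ℝ) ≤ s := by positivity
  set x : ℝ := j * (Λ / b) * s with hx
  set y : ℝ := (i * Real.log p + j * Real.log q) * s with hy
  have e1 : ((p ^ i * q ^ j : ℕ) : ℝ) ^ s = Real.exp y := by
    rw [hy, mul_comm _ (s : ℝ), Real.exp_nat_mul, Real.exp_add, Real.exp_nat_mul, Real.exp_nat_mul,
      Real.exp_log hp0, Real.exp_log hq0]
    push_cast
    rfl
  have e2 : ((i * b + j * a : ℕ) : ℝ) * (Real.log p / b) * s = x + y := by
    rw [hx, hy, hΛ]
    push_cast
    field_simp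
    ring
  have e3 : Complex.exp (((i * b + j * a : ℕ) : ℂ) * ((Real.log p / b : ℝ) : ℂ) * (s : ℂ)) -
      ((p ^ i * q ^ j : ℕ) : ℂ) ^ s = ((Real.exp y * (Real.exp x - 1) : ℝ) : ℂ) := by
    rw [mul_sub, ← Real.exp_add, mul_one, add_comm y x, ← e2, ← e1]
    push_cast
    rfl
  have hx1 : |x| ≤ L * Xm * |Λ| := by
    rw [hx, abs_mul, abs_mul, abs_div, Nat.abs_cast, Nat.abs_cast, Nat.abs_cast]
    have : |Λ| / b ≤ |Λ| := div_le_self (abs_nonneg _) hb'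
    calc (j : ℝ) * (|Λ| / b) * s ≤ L * |Λ| * Xm := by gcongr
      _ = _ := by ring
  have hx2 := Real.abs_exp_sub_one_le (hx1.trans hsmall)
  have hy1 : y ≤ (Real.log p + Real.log q + 1) * L * Xm := by
    rw [hy]
    calc (i * Real.log p + j * Real.log q) * (s : ℝ)
        ≤ (L * Real.log p + L * Real.log q) * Xm := by gcongr
      _ ≤ (L * Real.log p + L * Real.log q) * Xm + L * Xm :=
          le_add_of_nonneg_right (mul_nonneg (by positivity) (hs0.trans hs))
      _ = _ := by ring
  rw [e3, Complex.norm_real, norm_mul, Real.norm_eq_abs, Real.norm_eq_abs, Real.abs_exp]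
  gcongr
  linarith

set_option maxHeartbeats 1600000 in
/-- The Gel'fond–Baker–Fel'dman argument. Here `r` is large in terms of `p, q`, the degrees are
`L` in each exponential and `S * l` in the polynomial part, and `T` is the order of vanishing; the
zeros at `0, …, S - 1` are extrapolated in `17` steps, each halving the order and multiplying the
number of zeros by `κ`; then there are more zeros than the zero estimate allows. -/
lemma linear_form_core {p q : ℕ} (hp : 1 < p) (hq : 1 < q) (hindep : MultIndepPair p q)
    {r κ T L l S a b : ℕ} {B Λ : ℝ} (hB : B = Real.log p + Real.log q + 1)
    (hr : 4 * Real.exp (39 + 3 * B) ≤ (2 ^ r : ℕ)) (hκ : κ = 2 ^ (17 + r)) (hT : T = κ ^ 8)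
    (hL : L = κ ^ 6) (hl : l = 2 * κ ^ 4) (hS : 1 ≤ S)
    (hS1 : (T.factorial : ℝ) * (2 * L) ^ T ≤ Real.exp S) (hS2 : 2 * (S * T * T : ℝ) ≤ Real.exp S)
    (hb : 1 ≤ b) (ha' : (a : ℝ) ≤ Real.exp S) (hb' : (b : ℝ) ≤ Real.exp S)
    (hΛ : Λ = a * Real.log p - b * Real.log q) :
    1 / 2 ≤ Real.exp ((14 + B) * S * T + (5 + B) * L * (κ ^ 17 * S : ℕ)) *
      Real.exp ((6 * T + 2 + B * T) * S + 8 * T * ((2 ^ r : ℕ) * (κ ^ 17 * S : ℕ))) * |Λ| := by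
  by_contra! hcon
  have hlp : 0 ≤ Real.log p := Real.log_natCast_nonneg p
  have hlq : 0 ≤ Real.log q := Real.log_natCast_nonneg q
  have hB1 : 1 ≤ B := by linarith
  have hκ0 : 2 ^ 17 ≤ κ := by
    rw [hκ, pow_add]
    exact Nat.le_mul_of_pos_right _ (by positivity)
  have hκ1 : 1 ≤ κ := by omega
  have hT1 : 1 ≤ T := by rw [hT]; exact Nat.one_le_pow _ _ hκ1
  have hL1 : 1 ≤ L := by rw [hL]; exact Nat.one_le_pow _ _ hκ1
  have hlL : l ≤ L := by
    rw [hl, hL, show κ ^ 6 = κ ^ 2 * κ ^ 4 by ring]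
    gcongr
    nlinarith
  have hLT : L ≤ T := by rw [hL, hT]; exact Nat.pow_le_pow_right hκ1 (by norm_num)
  set Xm : ℕ := κ ^ 17 * S with hXm
  have hXm1 : 1 ≤ Xm := by rw [hXm]; exact Nat.mul_pos (by positivity) hS
  have hSXm : S ≤ Xm := Nat.le_mul_of_pos_left _ (by positivity)
  have hS' : (1 : ℝ) ≤ S := by exact_mod_cast hS
  have hT' : (1 : ℝ) ≤ T := by exact_mod_cast hT1
  have hL' : (1 : ℝ) ≤ L := by exact_mod_cast hL1
  have hSXm' : (S : ℝ) ≤ Xm := by exact_mod_cast hSXm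
  have hb1 : (1 : ℝ) ≤ b := by exact_mod_cast hb
  set E1 : ℝ := (14 + B) * S * T + (5 + B) * L * Xm with hE1
  set E2 : ℝ := (6 * T + 2 + B * T) * S + 8 * T * ((2 ^ r : ℕ) * Xm) with hE2
  have hΛsmall : L * Xm * |Λ| ≤ 1 := by
    have h1 : (L * Xm : ℝ) ≤ Real.exp E1 := by
      have : (L * Xm : ℝ) ≤ E1 := by
        rw [hE1]
        have : 0 ≤ (14 + B) * S * T := by positivity
        have h2 : 1 * (L * Xm : ℝ) ≤ (5 + B) * (L * Xm) := by gcongr; linarith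
        linarith
      linarith [Real.add_one_le_exp E1]
    have h2 : (1 : ℝ) ≤ Real.exp E2 := Real.one_le_exp (by positivity)
    calc L * Xm * |Λ| ≤ Real.exp E1 * |Λ| := by gcongr
      _ = Real.exp E1 * 1 * |Λ| := by ring
      _ ≤ Real.exp E1 * Real.exp E2 * |Λ| := by gcongr
      _ ≤ 1 := by linarith
  have hΛ1 : |Λ| ≤ 1 := by
    have h1 : (1 : ℝ) ≤ L * Xm := by
      have : (1 : ℝ) ≤ Xm := by exact_mod_cast hXm1
      nlinarith
    calc |Λ| = 1 * |Λ| := by ring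
      _ ≤ L * Xm * |Λ| := by gcongr
      _ ≤ 1 := hΛsmall
  -- `exp (v j * η)` is a perturbation of `w j`, since `v j * η` differs from `log (w j)` by
  -- `j.2 * Λ / b`; `D` clears the denominators in the polynomial parts.
  set v : Fin L × Fin L → ℕ := fun j => j.1 * b + j.2 * a with hv
  set w : Fin L × Fin L → ℕ := fun j => p ^ (j.1 : ℕ) * q ^ (j.2 : ℕ) with hw
  set D : ℕ := Nat.lcmUpto S with hDdef
  have hD1 : 1 ≤ D := Nat.lcmUpto_pos S
  have hDdvd : ∀ j, 1 ≤ j → j ≤ S → j ∣ D := fun j h1 h2 =>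
    Finset.dvd_lcm (f := id) (Finset.mem_Icc.2 ⟨h1, h2⟩)
  have hDexp : (D : ℝ) ≤ Real.exp (6 * S) := lcmUpto_le_exp S
  have hD1' : (1 : ℝ) ≤ D := by exact_mod_cast hD1
  set V : ℝ := 2 * L * Real.exp S with hVdef
  have hV1 : 1 ≤ V := by
    have : 1 ≤ Real.exp S := Real.one_le_exp (by positivity)
    rw [hVdef]
    nlinarith
  have hvV : ∀ j, (v j : ℝ) ≤ V := by
    intro j
    have h1 : ((j.1 : ℕ) : ℝ) ≤ L := by exact_mod_cast j.1.2.le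
    have h2 : ((j.2 : ℕ) : ℝ) ≤ L := by exact_mod_cast j.2.2.le
    simp only [hv]
    push_cast
    calc ((j.1 : ℕ) : ℝ) * b + (j.2 : ℕ) * a ≤ L * Real.exp S + L * Real.exp S := by gcongr
      _ = V := by rw [hVdef]; ring
  set W : ℝ := Real.exp (B * L) with hWdef
  have hW1 : 1 ≤ W := Real.one_le_exp (by positivity)
  have hwW : ∀ j, (w j : ℝ) ≤ W := by
    intro j
    have h1 : ((j.1 : ℕ) : ℝ) ≤ L := by exact_mod_cast j.1.2.le
    have h2 : ((j.2 : ℕ) : ℝ) ≤ L := by exact_mod_cast j.2.2.le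
    have hp0 : (0 : ℝ) < p := by positivity
    have hq0 : (0 : ℝ) < q := by positivity
    have h3 : (w j : ℝ) = Real.exp ((j.1 : ℕ) * Real.log p + (j.2 : ℕ) * Real.log q) := by
      rw [Real.exp_add, Real.exp_nat_mul, Real.exp_nat_mul, Real.exp_log hp0, Real.exp_log hq0]
      simp [hw]
    rw [h3]
    apply Real.exp_le_exp.2
    calc ((j.1 : ℕ) : ℝ) * Real.log p + (j.2 : ℕ) * Real.log q
        ≤ L * Real.log p + L * Real.log q := by gcongr
      _ ≤ B * L := by rw [hB]; linarith
  have hFV : (T.factorial : ℝ) * V ^ T ≤ Real.exp (S + S * T) := by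
    calc (T.factorial : ℝ) * V ^ T = T.factorial * (2 * L) ^ T * Real.exp (S * T) := by
          rw [hVdef, mul_pow, mul_comm (S : ℝ), Real.exp_nat_mul]; ring
      _ ≤ Real.exp S * Real.exp (S * T) := by gcongr
      _ = _ := by rw [← Real.exp_add]
  have hWS : W ^ S ≤ Real.exp (B * S * T) := by
    rw [hWdef, ← Real.exp_nat_mul]
    apply Real.exp_le_exp.2
    have : (L : ℝ) ≤ T := by exact_mod_cast hLT
    calc (S : ℝ) * (B * L) ≤ S * (B * T) := by gcongr
      _ = _ := by ring
  have hcard : S * l * Fintype.card (Fin L × Fin L) = 2 * (S * T * T) := by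
    simp only [Fintype.card_prod, Fintype.card_fin]
    rw [hl, hL, hT]
    ring
  have hN : ((S * l * Fintype.card (Fin L × Fin L) : ℕ) : ℝ) ≤ Real.exp S := by
    rw [hcard]
    push_cast
    exact hS2
  obtain ⟨c, hc0, hczero, hcle⟩ := exists_aux_coeffs (l := l) hS hT1 hDdvd hD1 v w hcard hvV hV1
    hwW hW1
  set Cb : ℝ := Real.exp ((11 + B) * S * T) with hCb
  have hcCb : ∀ i, |(c i : ℝ)| ≤ Cb := fun i => (hcle i).trans
    (coeff_estimate hT1 (hlL.trans hLT) hN (by positivity) hDexp (by positivity) (by positivity)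
      hFV (by positivity) hWS)
  set η : ℝ := Real.log p / b with hη
  have hη0 : 0 ≤ η := by positivity
  have hvη : ∀ j, (v j : ℝ) * η ≤ L * B := by
    intro j
    have h1 : ((j.1 : ℕ) : ℝ) ≤ L := by exact_mod_cast j.1.2.le
    have h2 : ((j.2 : ℕ) : ℝ) ≤ L := by exact_mod_cast j.2.2.le
    have h3 : (v j : ℝ) * η =
        (j.1 : ℕ) * Real.log p + (j.2 : ℕ) * Real.log q + (j.2 : ℕ) * (Λ / b) := by
      rw [hΛ, hη]
      simp only [hv]
      push_cast
      field_simp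
      ring
    have h4 : Λ / b ≤ 1 := by
      rw [div_le_one (by linarith)]
      linarith [le_abs_self Λ]
    rw [h3]
    calc _ ≤ L * Real.log p + L * Real.log q + ((j.2 : ℕ) : ℝ) * 1 := by gcongr
      _ ≤ L * Real.log p + L * Real.log q + L := by linarith
      _ = L * B := by rw [hB]; ring
  have hMbound : ∀ t ≤ T, ∀ u ≤ T, ∀ R : ℝ, (S : ℝ) ≤ R → ∀ z : ℂ, ‖z‖ = R →
      ‖auxFun S v c η t u z‖ ≤ Real.exp ((14 + B) * S * T + (3 + B) * (L * R)) := by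
    intro t ht u hu R hR z hz
    have hg : ∀ j, ‖Complex.exp (v j * η * z)‖ ≤ Real.exp (L * B * R) := by
      intro j
      refine (Complex.norm_exp_le_exp_norm _).trans (Real.exp_le_exp.2 ?_)
      rw [norm_mul, norm_mul, Complex.norm_natCast, Complex.norm_real, hz,
        Real.norm_of_nonneg hη0]
      have : 0 ≤ R := by linarith
      exact mul_le_mul_of_nonneg_right (hvη j) this
    have h1 := norm_auxSum_le v c hcCb (Real.exp_pos _).le hvV hV1 ht hu hz.le _ hg
    refine h1.trans ((value_estimate hS hT1 hlL hN (by positivity) (by positivity) hFV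
      (by positivity) le_rfl hR (by positivity)).trans ?_)
    rw [← Real.exp_add]
    apply Real.exp_le_exp.2
    linarith
  set δ : ℝ := Real.exp E1 * |Λ| with hδ
  have hδbound : ∀ t ≤ T, ∀ u ≤ T, ∀ s < Xm,
      ‖auxFun S v c η t u (s : ℂ) - auxSum S v c t u s (fun j => (w j : ℂ) ^ s)‖ ≤ δ := by
    intro t ht u hu s hs
    have hsX : (s : ℝ) ≤ Xm := by exact_mod_cast hs.le
    have h0 : auxFun S v c η t u (s : ℂ) - auxSum S v c t u s (fun j => (w j : ℂ) ^ s) =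
        auxSum S v c t u s (fun j => Complex.exp (v j * η * s) - (w j : ℂ) ^ s) := by
      simp only [auxFun, auxSum]
      rw [← Finset.sum_sub_distrib]
      exact Finset.sum_congr rfl fun i _ => by ring
    have hg : ∀ j, ‖Complex.exp (v j * η * s) - (w j : ℂ) ^ s‖ ≤
        Real.exp (B * L * Xm) * (2 * L * Xm * |Λ|) := by
      intro j
      rw [hB]
      exact exp_value_sub_le hp hq hb hΛ j.1.2 j.2.2 hsX hΛsmall
    rw [h0]
    have h1 := norm_auxSum_le v c hcCb (Real.exp_pos _).le hvV hV1 ht hu (R := Xm)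
      (z := (s : ℂ)) (by rw [Complex.norm_natCast]; exact hsX) _ hg
    refine h1.trans ((value_estimate hS hT1 hlL hN (by positivity) (by positivity) hFV
      (by positivity) le_rfl hSXm' (by positivity)).trans ?_)
    have h2 : (2 * L * Xm : ℝ) ≤ Real.exp (2 * L * Xm) := by
      linarith [Real.add_one_le_exp (2 * L * Xm : ℝ)]
    calc _ ≤ Real.exp ((14 + B) * S * T + 3 * L * Xm) *
          (Real.exp (B * L * Xm) * (Real.exp (2 * L * Xm) * |Λ|)) := by gcongr
      _ = Real.exp ((14 + B) * S * T + 3 * L * Xm) *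
          Real.exp (B * L * Xm) * Real.exp (2 * L * Xm) * |Λ| := by ring
      _ = δ := by
        rw [hδ, hE1]
        simp only [← Real.exp_add]
        congr 2
        ring
  -- Step `j` starts with order `T / 2 ^ j` on `κ ^ j * S` points; the Schwarz radius is
  -- `2 ^ r` times the number of points reached.
  have hextra : ∀ j ≤ 17, ∀ s < κ ^ j * S, ∀ t < 2 ^ (8 * (17 + r) - j),
      ∀ u < 2 ^ (8 * (17 + r) - j), auxSum S v c t u s (fun j => (w j : ℂ) ^ s) = 0 := by
    intro j
    induction j with
    | zero =>
      intro _ s hs t ht u hu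
      have hTe : 2 ^ (8 * (17 + r) - 0) = T := by
        rw [hT, hκ, ← pow_mul]
        congr 1
        omega
      rw [hTe] at ht hu
      exact hczero s (by simpa using hs) t ht u hu
    | succ j ih =>
      intro hj
      have ih' := ih (by omega)
      set T' : ℕ := 2 ^ (8 * (17 + r) - (j + 1)) with hT'def
      have hTT : T = 2 ^ (j + 1) * T' := by
        rw [hT, hκ, ← pow_mul, hT'def, ← pow_add]
        congr 1
        omega
      have h2T : 2 ^ (8 * (17 + r) - j) = 2 * T' := by
        rw [hT'def, ← pow_succ']
        congr 1
        omega
      rw [h2T] at ih'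
      have hT'0 : 0 < T' := by positivity
      have h2TT : 2 * T' ≤ T := by
        rw [hTT, pow_succ']
        have : 1 ≤ 2 ^ j := Nat.one_le_two_pow
        nlinarith
      have hXX : κ ^ (j + 1) * S ≤ Xm := by
        rw [hXm]
        gcongr
      have hXXr : ((κ ^ (j + 1) * S : ℕ) : ℝ) ≤ Xm := by exact_mod_cast hXX
      have hX0 : 0 < κ ^ (j + 1) * S := Nat.mul_pos (by positivity) hS
      have hX0r : (0 : ℝ) < ((κ ^ (j + 1) * S : ℕ) : ℝ) := by exact_mod_cast hX0
      have hSX : S ≤ κ ^ (j + 1) * S := Nat.le_mul_of_pos_left _ (by positivity)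
      have hSXr : (S : ℝ) ≤ ((κ ^ (j + 1) * S : ℕ) : ℝ) := by exact_mod_cast hSX
      have hρ4 : (4 : ℝ) ≤ (2 ^ r : ℕ) := by
        have : (1 : ℝ) ≤ Real.exp (39 + 3 * B) := Real.one_le_exp (by positivity)
        linarith
      set R : ℝ := (2 ^ r : ℕ) * (κ ^ (j + 1) * S : ℕ) with hR
      have hXR : 4 * ((κ ^ (j + 1) * S : ℕ) : ℝ) ≤ R := by rw [hR]; gcongr
      have hSR : (S : ℝ) ≤ R := by linarith
      have hAX : κ ^ j * S ≤ κ ^ (j + 1) * S := by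
        gcongr
        omega
      have hRm : R ≤ (2 ^ r : ℕ) * (Xm : ℝ) := by rw [hR]; gcongr
      apply extrapolation_step hS hDdvd hD1 v w c η hT'0 hX0 hAX hXR
        (M := Real.exp ((14 + B) * S * T + (3 + B) * (L * R))) (δ := δ)
        (fun t ht u hu z hz => hMbound t (by omega) u (by omega) R hSR z hz)
        (fun t ht u hu s hs => hδbound t (by omega) u (by omega) s (by omega)) ?_ ih'
      have hquot : 4 * ((κ ^ (j + 1) * S : ℕ) : ℝ) / R = 4 / ((2 ^ r : ℕ) : ℝ) := by
        rw [hR]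
        exact mul_div_mul_right _ _ hX0r.ne'
      have hmain : (D : ℝ) ^ T' * ((4 / ((2 ^ r : ℕ) : ℝ)) ^ (κ ^ j * S * T') *
          Real.exp ((14 + B) * S * T + (3 + B) * (L * R))) ≤ Real.exp (-2) := by
        apply main_term_estimate (by positivity) hDexp (by positivity) hr (S := S) (T := T)
          (LR := L * R) _ _ _ _ le_rfl
        · exact Nat.mul_pos (Nat.mul_pos (by positivity) hS) hT'0
        · gcongr
          exact Nat.le_mul_of_pos_left _ (by positivity)
        · have : 2 ^ j ≤ κ ^ j := Nat.pow_le_pow_left (by omega) j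
          calc S * T = 2 * (2 ^ j * S * T') := by rw [hTT]; ring
            _ ≤ 2 * (κ ^ j * S * T') := by gcongr
        · have h1 : 2 ^ (j + 1) * 2 ^ r ≤ κ := by
            rw [hκ, ← pow_add]
            exact Nat.pow_le_pow_right (by norm_num) (by omega)
          have h2 : 2 ^ (j + 1) * (L * (2 ^ r * (κ ^ (j + 1) * S))) ≤
              2 ^ (j + 1) * (κ ^ j * S * T') := by
            calc 2 ^ (j + 1) * (L * (2 ^ r * (κ ^ (j + 1) * S)))
                = (2 ^ (j + 1) * 2 ^ r) * (κ ^ 7 * κ ^ j * S) := by rw [hL]; ring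
              _ ≤ κ * (κ ^ 7 * κ ^ j * S) := by gcongr
              _ = κ ^ j * S * κ ^ 8 := by ring
              _ = 2 ^ (j + 1) * (κ ^ j * S * T') := by rw [← hT, hTT]; ring
          have h3 := Nat.le_of_mul_le_mul_left h2 (by positivity)
          rw [hR]
          exact_mod_cast h3
      have herr : (D : ℝ) ^ T' * (1 + 2 * (1 + η) ^ T' * Real.exp (8 * T' * R)) ≤ Real.exp E2 :=
        error_term_estimate hS (by omega) hD1' hDexp hη0 (by
          have : η ≤ Real.log p := div_le_self hlp hb1
          linarith) (by linarith) hRm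
      rw [hquot, Complex.norm_real, Real.norm_of_nonneg hη0, mul_add]
      have hexp2 : Real.exp (-2) < 1 / 2 := by
        rw [Real.exp_neg, inv_lt_comm₀ (Real.exp_pos _) (by norm_num)]
        linarith [Real.add_one_le_exp (2 : ℝ)]
      have hfin : (D : ℝ) ^ T' * (δ * (1 + 2 * (1 + η) ^ T' * Real.exp (8 * T' * R))) < 1 / 2 := by
        calc _ = δ * ((D : ℝ) ^ T' * (1 + 2 * (1 + η) ^ T' * Real.exp (8 * T' * R))) := by ring
          _ ≤ δ * Real.exp E2 := by gcongr
          _ = Real.exp E1 * Real.exp E2 * |Λ| := by rw [hδ]; ring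
          _ < 1 / 2 := hcon
      linarith
  -- The zero estimate only needs `2 * S * T ^ 2 = 2 * κ ^ 16 * S` simple zeros.
  have hzeroest := feld_zero_estimate (fun j => ((w j : ℕ) : ℂ)) (hindep.injective hp hq L)
    (fun j => by
      have : 0 < w j := Nat.mul_pos (by positivity) (by positivity)
      exact_mod_cast this.ne') S (S * l) (fun i => (c i : ℂ)) (by
      intro s hs
      have hs' : s < κ ^ 17 * S := by
        refine hs.trans_le ?_
        rw [hcard, hT]
        calc 2 * (S * κ ^ 8 * κ ^ 8) = 2 * (κ ^ 16 * S) := by ring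
          _ ≤ κ * (κ ^ 16 * S) := by gcongr; omega
          _ = _ := by ring
      have h1 := hextra 17 le_rfl s hs' 0 (by positivity) 0 (by positivity)
      simpa [auxSum] using h1)
  apply hc0
  funext i
  have := congrFun hzeroest i
  simpa using this

/-- A Fel'dman-type bound: the linear form is at least a negative power of its coefficients. -/
lemma linear_form_bound {p q : ℕ} (hp : 1 < p) (hq : 1 < q) (hindep : MultIndepPair p q) :
    ∃ (c : ℝ) (K : ℕ), 0 < c ∧ ∀ (a b : ℕ) (N : ℝ), 1 ≤ b → (a : ℝ) ≤ N → (b : ℝ) ≤ N →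
      c ≤ N ^ K * |a * Real.log p - b * Real.log q| := by
  have hlp : 0 ≤ Real.log p := Real.log_natCast_nonneg p
  have hlq : 0 ≤ Real.log q := Real.log_natCast_nonneg q
  obtain ⟨B, hB⟩ : ∃ B, B = Real.log p + Real.log q + 1 := ⟨_, rfl⟩
  have hB1 : 1 ≤ B := by linarith
  obtain ⟨r, hr⟩ : ∃ r : ℕ, 4 * Real.exp (39 + 3 * B) < (2 : ℝ) ^ r :=
    pow_unbounded_of_one_lt _ (by norm_num)
  obtain ⟨κ, hκ⟩ : ∃ κ, κ = 2 ^ (17 + r) := ⟨_, rfl⟩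
  obtain ⟨T, hT⟩ : ∃ T, T = κ ^ 8 := ⟨_, rfl⟩
  obtain ⟨L, hL⟩ : ∃ L, L = κ ^ 6 := ⟨_, rfl⟩
  obtain ⟨l, hl⟩ : ∃ l, l = 2 * κ ^ 4 := ⟨_, rfl⟩
  set K0 : ℝ := (14 + B) * T + (5 + B) * L * κ ^ 17 + (6 * T + 2 + B * T) +
    8 * T * (2 ^ r * κ ^ 17) + 1 with hK0
  obtain ⟨K, hK⟩ := exists_nat_ge K0
  have hev : ∀ᶠ S : ℕ in Filter.atTop, 1 ≤ S ∧ (T.factorial : ℝ) * (2 * L) ^ T ≤ Real.exp S ∧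
      2 * (S * T * T : ℝ) ≤ Real.exp S := by
    have e1 : Filter.Tendsto (fun S : ℕ => Real.exp S) Filter.atTop Filter.atTop :=
      Real.tendsto_exp_atTop.comp tendsto_natCast_atTop_atTop
    have e2 : Filter.Tendsto (fun S : ℕ => Real.exp S / (S : ℝ) ^ 1) Filter.atTop Filter.atTop :=
      (Real.tendsto_exp_div_pow_atTop 1).comp tendsto_natCast_atTop_atTop
    filter_upwards [Filter.eventually_ge_atTop 1, e1.eventually_ge_atTop _,
      e2.eventually_ge_atTop (2 * T * T)] with S h1 h2 h3
    refine ⟨h1, h2, ?_⟩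
    have hS0 : (0 : ℝ) < S := by exact_mod_cast h1
    rw [pow_one, le_div_iff₀ hS0] at h3
    linarith
  obtain ⟨S0, hS0⟩ := Filter.eventually_atTop.1 hev
  refine ⟨Real.exp (-(K * (S0 + 1))), K, Real.exp_pos _, ?_⟩
  intro a b N hb haN hbN
  have hb1 : (1 : ℝ) ≤ b := by exact_mod_cast hb
  have hN1 : 1 ≤ N := hb1.trans hbN
  have hN0 : 0 < N := by linarith
  set S : ℕ := ⌈Real.log N⌉₊ + S0 with hS
  obtain ⟨h1, h2, h3⟩ := hS0 S (by omega)
  have hNS : N ≤ Real.exp S := by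
    rw [← Real.log_le_iff_le_exp hN0, hS]
    push_cast
    have := Nat.le_ceil (Real.log N)
    have h0 : (0 : ℝ) ≤ S0 := by positivity
    linarith
  have hSN : (S : ℝ) ≤ Real.log N + (S0 + 1) := by
    rw [hS]
    push_cast
    have := Nat.ceil_lt_add_one (Real.log_nonneg hN1)
    linarith
  have h4 := linear_form_core hp hq hindep hB (by push_cast; exact hr.le) hκ hT hL hl h1 h2 h3 hb
    (haN.trans hNS) (hbN.trans hNS) rfl
  set Λ : ℝ := a * Real.log p - b * Real.log q with hΛ
  have hS1 : (1 : ℝ) ≤ S := by exact_mod_cast h1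
  have h5 : 1 ≤ Real.exp (K * S) * |Λ| := by
    have e1 : 2 ≤ Real.exp S := by linarith [Real.add_one_le_exp (S : ℝ)]
    have e2 : Real.exp S * (Real.exp ((14 + B) * S * T + (5 + B) * L * (κ ^ 17 * S : ℕ)) *
        Real.exp ((6 * T + 2 + B * T) * S + 8 * T * ((2 ^ r : ℕ) * (κ ^ 17 * S : ℕ)))) =
        Real.exp (K0 * S) := by
      simp only [← Real.exp_add]
      congr 1
      rw [hK0]
      push_cast
      ring
    calc (1 : ℝ) = 2 * (1 / 2) := by norm_num
      _ ≤ Real.exp S * (Real.exp ((14 + B) * S * T + (5 + B) * L * (κ ^ 17 * S : ℕ)) *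
        Real.exp ((6 * T + 2 + B * T) * S + 8 * T * ((2 ^ r : ℕ) * (κ ^ 17 * S : ℕ))) * |Λ|) := by
          gcongr
      _ = Real.exp (K0 * S) * |Λ| := by rw [← e2]; ring
      _ ≤ Real.exp (K * S) * |Λ| := by gcongr
  have h6 : Real.exp (K * S) ≤ N ^ K * Real.exp (K * (S0 + 1)) := by
    calc Real.exp (K * S) ≤ Real.exp (K * (Real.log N + (S0 + 1))) := by gcongr
      _ = _ := by rw [mul_add, Real.exp_add, Real.exp_nat_mul, Real.exp_log hN0]
  rw [Real.exp_neg, inv_le_iff_one_le_mul₀ (Real.exp_pos _)]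
  calc 1 ≤ Real.exp (K * S) * |Λ| := h5
    _ ≤ N ^ K * Real.exp (K * (S0 + 1)) * |Λ| := by gcongr
    _ = _ := by ring

/-! ### Small gaps in the additive semigroup generated by two logarithms -/

/-- Trading `j` copies of `β` for `k` copies of `α` increases the sum by `θ`, so that multiples of
`β` can be corrected in steps of `θ`. -/
lemma exists_sum_near {α β θ x : ℝ} {k j : ℕ} (hβ : 0 < β) (hθ : 0 < θ)
    (hkj : k * α - j * β = θ) (hx : β / θ * j * β + β ≤ x) :
    ∃ ℓ m : ℕ, 0 ≤ x - (ℓ * α + m * β) ∧ x - (ℓ * α + m * β) ≤ θ := by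
  have hx0 : 0 ≤ x := le_trans (by positivity) hx
  set m0 : ℕ := ⌊x / β⌋₊ with hm0
  have h1 : m0 * β ≤ x := (le_div_iff₀ hβ).1 (Nat.floor_le (by positivity))
  have h2 : x < (m0 + 1) * β := (div_lt_iff₀ hβ).1 (Nat.lt_floor_add_one _)
  set r : ℝ := x - m0 * β with hr
  have hr0 : 0 ≤ r := by linarith
  set u : ℕ := ⌊r / θ⌋₊ with hu
  have h3 : u * θ ≤ r := (le_div_iff₀ hθ).1 (Nat.floor_le (by positivity))
  have h4 : r < (u + 1) * θ := (div_lt_iff₀ hθ).1 (Nat.lt_floor_add_one _)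
  have h5 : u * j ≤ m0 := by
    have h6 : (u : ℝ) ≤ β / θ := by
      rw [le_div_iff₀ hθ]
      linarith
    have h7 : (u * j : ℝ) * β + β ≤ x := le_trans (by gcongr) hx
    have h8 : (u * j : ℝ) < m0 := by
      have : ((u * j : ℝ) + 1) * β < (m0 + 1) * β := by linarith
      linarith [lt_of_mul_lt_mul_right this hβ.le]
    exact_mod_cast h8.le
  refine ⟨u * k, m0 - u * j, ?_⟩
  have h9 : x - (((u * k : ℕ) : ℝ) * α + ((m0 - u * j : ℕ) : ℝ) * β) = r - u * θ := by
    rw [Nat.cast_sub h5, hr, ← hkj]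
    push_cast
    ring
  rw [h9]
  constructor <;> linarith

/-- Dirichlet's theorem makes the gaps as small as `log q / (Q + 1)`; the lower bound for the linear
form controls how large `x` must be. -/
lemma exists_log_sum_near {p q : ℕ} (hp : 1 < p) (hq : 1 < q) (hindep : MultIndepPair p q) :
    ∃ K Q0 : ℕ, ∀ Q : ℕ, Q0 ≤ Q → ∀ x : ℝ, (Q : ℝ) ^ (K + 2) ≤ x → ∃ ℓ m : ℕ,
      0 ≤ x - (ℓ * Real.log p + m * Real.log q) ∧
        x - (ℓ * Real.log p + m * Real.log q) ≤ Real.log q / (Q + 1) := by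
  obtain ⟨c, K, hc, hbound⟩ := linear_form_bound hp hq hindep
  have hα : 0 < Real.log p := Real.log_pos (by exact_mod_cast hp)
  have hβ : 0 < Real.log q := Real.log_pos (by exact_mod_cast hq)
  set α := Real.log p with hαdef
  set β := Real.log q with hβdef
  set ξ : ℝ := α / β with hξ
  have hξ0 : 0 < ξ := by positivity
  set μ : ℝ := max α β with hμ
  have hμ0 : 0 < μ := lt_max_of_lt_left hα
  set C2 : ℝ := μ ^ 2 * (ξ + 1) ^ (K + 1) / c with hC2
  have hC20 : 0 < C2 := by positivity
  obtain ⟨Q0, hQ0⟩ := exists_nat_ge (C2 + μ + 1 / ξ + 1)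
  refine ⟨K, Q0, ?_⟩
  intro Q hQ x hx
  have hQr : C2 + μ + 1 / ξ + 1 ≤ Q := hQ0.trans (by exact_mod_cast hQ)
  have hξi : 0 < 1 / ξ := by positivity
  have hQ1 : (1 : ℝ) ≤ Q := by linarith
  have hQpos : 0 < Q := by exact_mod_cast (by linarith : (0 : ℝ) < Q)
  obtain ⟨j', k', hk0, hkQ, hjk⟩ := Real.exists_int_int_abs_mul_sub_le ξ hQpos
  have hk1 : (1 : ℝ) ≤ k' := by exact_mod_cast hk0
  have hsm : 1 / ((Q : ℝ) + 1) < ξ := by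
    rw [div_lt_comm₀ (by linarith) hξ0]
    linarith
  have hj0 : 0 < j' := by
    have h1 := (abs_le.1 hjk).2
    have h2 : 1 * ξ ≤ k' * ξ := by gcongr
    have : (0 : ℝ) < j' := by linarith
    exact_mod_cast this
  lift k' to ℕ using hk0.le with k
  lift j' to ℕ using hj0.le with j
  have hkQ' : (k : ℝ) ≤ Q := by exact_mod_cast hkQ
  simp only [Int.cast_natCast] at hjk hk1
  have hj1 : 1 ≤ j := by omega
  set N : ℝ := Q * (ξ + 1) with hN
  have hkN : (k : ℝ) ≤ N := by rw [hN]; nlinarith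
  have hjN : (j : ℝ) ≤ N := by
    have h1 := (abs_le.1 hjk).1
    have h2 : 1 / ((Q : ℝ) + 1) ≤ 1 := by
      rw [div_le_one (by linarith)]
      linarith
    have h3 : k * ξ ≤ Q * ξ := by gcongr
    rw [hN]
    linarith
  have hΛ := hbound k j N hj1 hkN hjN
  set Λ : ℝ := k * α - j * β with hΛdef
  have hΛ0 : 0 < |Λ| := by
    rcases (abs_nonneg Λ).eq_or_lt with h | h
    · rw [← h, mul_zero] at hΛ
      linarith
    · exact h
  have hΛle : |Λ| ≤ β / (Q + 1) := by
    have h1 : Λ = β * (k * ξ - j) := by rw [hΛdef, hξ]; field_simp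
    rw [h1, abs_mul, abs_of_pos hβ, div_eq_mul_one_div]
    gcongr
  have hN0 : 0 < N := by positivity
  have hbig : μ / |Λ| * N * μ + μ ≤ x := by
    have h1 : 1 / |Λ| ≤ N ^ K / c := by
      rw [div_le_div_iff₀ hΛ0 hc]
      linarith
    calc μ / |Λ| * N * μ + μ = μ ^ 2 * N * (1 / |Λ|) + μ := by ring
      _ ≤ μ ^ 2 * N * (N ^ K / c) + μ * Q ^ (K + 1) := by
        gcongr
        exact le_mul_of_one_le_right hμ0.le (one_le_pow₀ hQ1)
      _ = (C2 + μ) * Q ^ (K + 1) := by rw [hC2, hN, mul_pow]; ring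
      _ ≤ Q * Q ^ (K + 1) := by gcongr; linarith
      _ = Q ^ (K + 2) := by ring
      _ ≤ x := hx
  have hαμ : α ≤ μ := le_max_left _ _
  have hβμ : β ≤ μ := le_max_right _ _
  rcases le_total 0 Λ with h | h
  · rw [abs_of_nonneg h] at hΛ0 hΛle hbig
    obtain ⟨ℓ, m, h1, h2⟩ := exists_sum_near (x := x) hβ hΛ0 hΛdef.symm
      (le_trans (by gcongr) hbig)
    exact ⟨ℓ, m, h1, h2.trans hΛle⟩
  · rw [abs_of_nonpos h] at hΛ0 hΛle hbig
    obtain ⟨m, ℓ, h1, h2⟩ := exists_sum_near (x := x) (α := β) (β := α) (k := j) (j := k) hα hΛ0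
      (by rw [hΛdef]; ring) (le_trans (by gcongr) hbig)
    refine ⟨ℓ, m, ?_, ?_⟩
    · linarith
    · linarith

theorem exists_close_power_product (p q : ℕ) (hp : 1 < p) (hq : 1 < q)
    (hindep : MultIndepPair p q) :
    ∃ C κ : ℝ, ∃ N₀ : ℕ, 0 < C ∧ 0 < κ ∧ ∀ n : ℕ, N₀ ≤ n →
      ∃ ℓ m : ℕ,
        (n : ℝ) / 2 < (p : ℝ) ^ ℓ * (q : ℝ) ^ m ∧
        (p : ℝ) ^ ℓ * (q : ℝ) ^ m ≤ (n : ℝ) ∧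
        (n : ℝ) - (p : ℝ) ^ ℓ * (q : ℝ) ^ m ≤ C * n / (Real.log n) ^ κ := by
  obtain ⟨K, Q0, hmain⟩ := exists_log_sum_near hp hq hindep
  have hβ : 0 < Real.log q := Real.log_pos (by exact_mod_cast hq)
  obtain ⟨Q1, hQ1⟩ := exists_nat_ge (2 * Real.log q)
  obtain ⟨N₀, hN₀⟩ := exists_nat_ge (Real.exp (((Q0 + Q1 + 1 : ℕ) : ℝ) ^ (K + 2)))
  refine ⟨Real.log q, 1 / ((K + 2 : ℕ) : ℝ), N₀, hβ, by positivity, ?_⟩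
  intro n hn
  have hn1 : Real.exp (((Q0 + Q1 + 1 : ℕ) : ℝ) ^ (K + 2)) ≤ n := hN₀.trans (by exact_mod_cast hn)
  have hn0 : (0 : ℝ) < n := (Real.exp_pos _).trans_le hn1
  have hp0 : (0 : ℝ) < p := by positivity
  have hq0 : (0 : ℝ) < q := by positivity
  set x : ℝ := Real.log n with hx
  have hx1 : ((Q0 + Q1 + 1 : ℕ) : ℝ) ^ (K + 2) ≤ x := (Real.le_log_iff_exp_le hn0).2 hn1
  have hx0 : 0 < x := lt_of_lt_of_le (by positivity) hx1
  set y : ℝ := x ^ (1 / ((K + 2 : ℕ) : ℝ)) with hy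
  have hyx : y ^ (K + 2) = x := by
    rw [hy, one_div, Real.rpow_inv_natCast_pow hx0.le (by omega)]
  have hy0 : 0 < y := Real.rpow_pos_of_pos hx0 _
  have hQy : ((Q0 + Q1 + 1 : ℕ) : ℝ) ≤ y := by
    rw [← hyx] at hx1
    exact le_of_pow_le_pow_left₀ (by omega) hy0.le hx1
  set Q : ℕ := ⌊y⌋₊ with hQ
  have hQQ : Q0 + Q1 + 1 ≤ Q := Nat.le_floor hQy
  have hQx : (Q : ℝ) ^ (K + 2) ≤ x := by
    rw [← hyx]
    gcongr
    exact Nat.floor_le hy0.le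
  obtain ⟨ℓ, m, h1, h2⟩ := hmain Q (by omega) x hQx
  set d : ℝ := x - (ℓ * Real.log p + m * Real.log q) with hd
  have hprod : (p : ℝ) ^ ℓ * (q : ℝ) ^ m = n * Real.exp (-d) := by
    have h3 : ℓ * Real.log p + m * Real.log q = x + -d := by rw [hd]; ring
    rw [← Real.exp_log hn0, ← hx, ← Real.exp_add, ← h3, Real.exp_add, Real.exp_nat_mul,
      Real.exp_nat_mul, Real.exp_log hp0, Real.exp_log hq0]
  have hdy : d ≤ Real.log q / y := h2.trans (by
    have := Nat.lt_floor_add_one y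
    gcongr)
  have hd2 : d < 1 / 2 := by
    refine h2.trans_lt ?_
    have h4 : (Q1 : ℝ) ≤ Q := by exact_mod_cast (by omega : Q1 ≤ Q)
    rw [div_lt_iff₀ (by positivity)]
    linarith
  have hexp : 1 - d ≤ Real.exp (-d) := by linarith [Real.add_one_le_exp (-d)]
  refine ⟨ℓ, m, ?_, ?_, ?_⟩
  · rw [hprod]
    have : (n : ℝ) * (1 / 2) < n * Real.exp (-d) := by gcongr; linarith
    linarith
  · rw [hprod]
    exact mul_le_of_le_one_right hn0.le (Real.exp_le_one_iff.2 (by linarith))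
  · rw [hprod]
    calc (n : ℝ) - n * Real.exp (-d) = n * (1 - Real.exp (-d)) := by ring
      _ ≤ n * (Real.log q / y) := by gcongr; linarith
      _ = Real.log q * n / y := by ring
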